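/- arXiv:2306.09655 — 2 statements merged into one kernel-verified Lean document; each statement's English description precedes it below -/
import Mathlib

section
/- Let D be a 2-strong digraph of order n ≥ 3 such that n−1 of its vertices have degree at least n+k and the remaining vertex z has degree at least n−k−4, where k ≥ 0 is an integer. If D contains a directed cycle of length at least n−k−2 passing through z, then D is Hamiltonian. -/
/-! A digraph on a vertex type `V` is given by its arc relation `A : V → V → Prop`
(this automatically forbids multiple arcs); looplessness is expressed by the
hypothesis `Irreflexive A`. -/

/-- The degree of `x`: its out-degree plus its in-degree. -/
noncomputable def degree {V : Type*} (A : V → V → Prop) (x : V) : ℕ :=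
  {y | A x y}.ncard + {y | A y x}.ncard

/-- `degreeIn A x S` is the number of arcs between `x` and vertices of `S`,
in both directions. -/
noncomputable def degreeIn {V : Type*} (A : V → V → Prop) (x : V) (S : Set V) : ℕ :=
  {y ∈ S | A x y}.ncard + {y ∈ S | A y x}.ncard

/-- `c : Fin m → V` is a directed cycle of length `m` (indices taken mod `m`). -/
def IsCycle {V : Type*} (A : V → V → Prop) {m : ℕ} (c : Fin m → V) : Prop :=
  2 ≤ m ∧ Function.Injective c ∧
    ∀ i : Fin m, A (c i) (c ⟨(i.val + 1) % m, Nat.mod_lt _ i.pos⟩)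

/-- `p : Fin m → V` is a directed path on `m` vertices (of length `m - 1`). -/
def IsPath {V : Type*} (A : V → V → Prop) {m : ℕ} (p : Fin m → V) : Prop :=
  Function.Injective p ∧ ∀ (i : Fin m) (h : i.val + 1 < m), A (p i) (p ⟨i.val + 1, h⟩)

/-- A digraph is Hamiltonian if it has a directed cycle through all of its vertices. -/
def IsHamiltonian {V : Type*} [Fintype V] (A : V → V → Prop) : Prop :=
  ∃ c : Fin (Fintype.card V) → V, IsCycle A c ∧ Function.Surjective c

/-- Reachability by a directed path staying inside the set `S`. -/
def ReachIn {V : Type*} (A : V → V → Prop) (S : Set V) : V → V → Prop :=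
  Relation.ReflTransGen (fun u v => u ∈ S ∧ v ∈ S ∧ A u v)

/-- A digraph is strong if every vertex is reachable from every other by a directed path. -/
def IsStrong {V : Type*} (A : V → V → Prop) : Prop :=
  ∀ x y : V, Relation.ReflTransGen A x y

/-- A digraph is `k`-strong if it has at least `k + 1` vertices and the deletion of
any set of at most `k - 1` vertices leaves a strong digraph. -/
def IsKStrong {V : Type*} [Fintype V] (A : V → V → Prop) (k : ℕ) : Prop :=
  k + 1 ≤ Fintype.card V ∧
    ∀ S : Set V, S.ncard ≤ k - 1 → ∀ x ∈ Sᶜ, ∀ y ∈ Sᶜ, ReachIn A Sᶜ x y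

/-!
Number the vertices so that `0, 1, …, N` is a longest cycle through `z = 0`, and suppose that it is
not Hamiltonian. A vertex `u` off the cycle cannot be inserted between two consecutive vertices of
it, so that it misses an arc for each arc of the cycle. The degree of `u` leaves no room for further
missing arcs: `n = N + k + 3`, the vertices off the cycle form a complete digraph `B`, and for each
arc `t → t + 1` of the cycle exactly one of `t → u` and `u → t + 1` exists. All vertices of `B` have
the same neighbours on the cycle, and by 2-strength these are described by a threshold
`1 < a < N`: the arcs from the cycle to `B` leave `[a, N]` and those from `B` enter `[1, a]`.

The vertex `0` is not adjacent to `B`, and by its degree at most two positions `t` on the path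
`1, …, N` are gaps, where both `t → 0` and `0 → t + 1` are missing. The contradiction is a third
gap. Monotone adjacencies of `0` (no `i < j` with `i → 0` and `0 → j`) produce one, because some
arc has to bypass `a`. Otherwise a closest such pair `i < j` lies on one side of the threshold, and
after reversing all arcs if necessary `a ≤ i`. As `0, j, …, N, B, 1, …, i` is a cycle, each vertex
strictly between `i` and `j` is forced by its degree to have exactly one of the two arcs at each
position of the paths `1, …, i` and `j, …, N`, as it was the case for `B`. Deleting the first
vertex `c` of `[1, i]` that dominates these vertices, an arc into a vertex `p` of `(c, i]` remains,
and `p - 1` is an additional gap.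
-/

section Counting

/-- The Iverson bracket of a proposition, used to count arcs. -/
noncomputable def ind (P : Prop) : ℕ := open Classical in if P then 1 else 0

/-- The number of arcs, in both directions, between two vertices. -/
noncomputable def arcs {V : Type*} (A : V → V → Prop) (x y : V) : ℕ := ind (A x y) + ind (A y x)

lemma ind_of_not {P : Prop} (h : ¬P) : ind P = 0 := if_neg h

lemma ind_le_one (P : Prop) : ind P ≤ 1 := by
  unfold ind
  split_ifs <;> omega

lemma one_le_ind {P : Prop} : 1 ≤ ind P ↔ P := by
  unfold ind
  split_ifs <;> simpa

lemma ind_add_ind_add_ind_neither {P Q : Prop} (h : ¬(P ∧ Q)) :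
    ind P + ind Q + ind (¬P ∧ ¬Q) = 1 := by
  unfold ind
  split_ifs <;> tauto

lemma ind_add_ind_le_one {P Q : Prop} (h : ¬(P ∧ Q)) : ind P + ind Q ≤ 1 := by
  have := ind_add_ind_add_ind_neither h
  omega

lemma iff_not_of_one_le_ind_add_ind {P Q : Prop} (h : ¬(P ∧ Q)) (h1 : 1 ≤ ind P + ind Q) :
    P ↔ ¬Q := by
  have : ind (¬P ∧ ¬Q) = 0 := by
    have := ind_add_ind_add_ind_neither h
    omega
  have : ¬(¬P ∧ ¬Q) := fun hPQ => by
    have := one_le_ind.2 hPQ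
    omega
  tauto

variable {V : Type*} {A : V → V → Prop} {x : V}

lemma arcs_eq_zero {y : V} (h : ¬A x y) (h' : ¬A y x) : arcs A x y = 0 := by
  rw [arcs, ind_of_not h, ind_of_not h']

lemma arcs_le_two (A : V → V → Prop) (x y : V) : arcs A x y ≤ 2 :=
  Nat.add_le_add (ind_le_one _) (ind_le_one _)

lemma degreeIn_eq_sum (A : V → V → Prop) (x : V) (s : Finset V) :
    degreeIn A x s = ∑ y ∈ s, arcs A x y := by
  classical
  have hcount (P : V → Prop) : {y ∈ (s : Set V) | P y}.ncard = ∑ y ∈ s, ind (P y) := by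
    rw [show {y ∈ (s : Set V) | P y} = ↑(s.filter P) by ext; simp, Set.ncard_coe_finset,
      Finset.card_filter]
    simp only [ind]
  simp only [degreeIn, hcount, arcs, Finset.sum_add_distrib]

lemma degreeIn_reverse (A : V → V → Prop) (x : V) (S : Set V) :
    degreeIn (fun y z => A z y) x S = degreeIn A x S :=
  add_comm _ _

lemma degreeIn_image {W : Type*} {f : W → V} {S : Set W} (hf : S.InjOn f) (A : V → V → Prop)
    (u : W) : degreeIn A (f u) (f '' S) = degreeIn (fun s t => A (f s) (f t)) u S := by
  have himage (P : V → Prop) : {y ∈ f '' S | P y}.ncard = {t ∈ S | P (f t)}.ncard := by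
    rw [show {y ∈ f '' S | P y} = f '' {t ∈ S | P (f t)} by ext; aesop,
      Set.InjOn.ncard_image (hf.mono fun t ht => ht.1)]
  rw [degreeIn, degreeIn, himage, himage]

lemma degreeIn_eq_zero {s : Finset V} (h : ∀ y ∈ s, ¬A x y ∧ ¬A y x) : degreeIn A x s = 0 := by
  rw [degreeIn_eq_sum]
  exact Finset.sum_eq_zero fun y hy => arcs_eq_zero (h y hy).1 (h y hy).2

lemma degreeIn_le_card {s : Finset V} (h : ∀ y ∈ s, ¬A y x) : degreeIn A x s ≤ s.card := by
  rw [degreeIn_eq_sum, Finset.card_eq_sum_ones]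
  refine Finset.sum_le_sum fun y hy => ?_
  rw [arcs, ind_of_not (h y hy)]
  exact ind_le_one _

section Complete

variable {s : Finset V}

lemma degreeIn_add_two_le_two_mul_card (hirr : ¬A x x) (hx : x ∈ s) :
    degreeIn A x s + 2 ≤ 2 * s.card := by
  classical
  have hle : ∑ y ∈ s.erase x, arcs A x y ≤ (s.erase x).card * 2 :=
    Finset.sum_le_card_nsmul _ _ _ fun y _ => arcs_le_two A x y
  rw [degreeIn_eq_sum, ← Finset.add_sum_erase _ _ hx, arcs_eq_zero hirr hirr]
  have := Finset.card_erase_add_one hx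
  omega

lemma complete_of_two_mul_card_le (hirr : ¬A x x) (hx : x ∈ s)
    (h : 2 * s.card ≤ degreeIn A x s + 2) {y : V} (hy : y ∈ s) (hyx : y ≠ x) :
    A x y ∧ A y x := by
  classical
  have hys : y ∈ s.erase x := Finset.mem_erase.2 ⟨hyx, hy⟩
  have hle : ∑ w ∈ (s.erase x).erase y, arcs A x w ≤ ((s.erase x).erase y).card * 2 :=
    Finset.sum_le_card_nsmul _ _ _ fun w _ => arcs_le_two A x w
  rw [degreeIn_eq_sum, ← Finset.add_sum_erase _ _ hx, arcs_eq_zero hirr hirr,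
    ← Finset.add_sum_erase _ _ hys, arcs] at h
  have := Finset.card_erase_add_one hx
  have := Finset.card_erase_add_one hys
  have := ind_le_one (A x y)
  have := ind_le_one (A y x)
  exact ⟨one_le_ind.1 (by omega), one_le_ind.1 (by omega)⟩

end Complete

end Counting

section Insertion

variable {V : Type*} {A : V → V → Prop} {u x y z : V} {l : List V}

lemma exists_perm_cons_isChain (hl : List.IsChain A (x :: (l ++ [y])))
    (hu : ¬List.IsChain (fun s t => ¬(A s u ∧ A u t)) (x :: (l ++ [y]))) :
    ∃ l' : List V, l'.Perm (u :: l) ∧ List.IsChain A (x :: (l' ++ [y])) := by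
  induction l generalizing x with
  | nil =>
    rw [List.nil_append, List.isChain_pair, not_not] at hu
    exact ⟨[u], .refl _, by simp [hu]⟩
  | cons w l ih =>
    simp only [List.cons_append, List.isChain_cons_cons] at hl hu
    by_cases hxw : A x u ∧ A u w
    · exact ⟨u :: w :: l, .refl _, by simp [hxw, hl.2]⟩
    · obtain ⟨l', hperm, hl'⟩ := ih hl.2 fun h => hu ⟨hxw, h⟩
      exact ⟨w :: l', (hperm.cons w).trans (.swap u w l), by simp [hl.1, hl']⟩

lemma sum_arcs_le_length (h : List.IsChain (fun s t => ¬(A s u ∧ A u t)) (x :: (l ++ [y]))) :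
    ind (A x u) + (l.map (arcs A u)).sum + ind (A u y) ≤ l.length + 1 := by
  induction l generalizing x with
  | nil =>
    have := ind_add_ind_le_one (List.isChain_pair.1 h)
    simpa using this
  | cons w l ih =>
    rw [List.cons_append, List.isChain_cons_cons] at h
    have htail := ih h.2
    have hhead := ind_add_ind_le_one h.1
    simp only [List.map_cons, List.sum_cons, List.length_cons, arcs]
    omega

lemma isChain_iff_not_of_length_le_sum_arcs
    (h : List.IsChain (fun s t => ¬(A s u ∧ A u t)) (x :: (l ++ [y])))
    (hle : l.length + 1 ≤ ind (A x u) + (l.map (arcs A u)).sum + ind (A u y)) :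
    List.IsChain (fun s t => A s u ↔ ¬A u t) (x :: (l ++ [y])) := by
  induction l generalizing x with
  | nil =>
    rw [List.nil_append, List.isChain_pair] at h ⊢
    exact iff_not_of_one_le_ind_add_ind h (by simpa using hle)
  | cons w l ih =>
    rw [List.cons_append, List.isChain_cons_cons] at h ⊢
    have htail := sum_arcs_le_length h.2
    have hhead := ind_add_ind_le_one h.1
    simp only [List.map_cons, List.sum_cons, List.length_cons, arcs] at hle htail
    exact ⟨iff_not_of_one_le_ind_add_ind h.1 (by omega), ih h.2 (by omega)⟩

/-- `z :: l` lists the vertices of a directed cycle (or consists of `z` with a loop), in order. -/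
structure IsCycleAt (A : V → V → Prop) (z : V) (l : List V) : Prop where
  nodup : (z :: l).Nodup
  isChain : List.IsChain A (z :: (l ++ [z]))

namespace IsCycleAt

lemma map {W : Type*} {B : W → W → Prop} {f : V → W} (hf : Set.InjOn f {v | v ∈ z :: l})
    (h : IsCycleAt (fun s t => B (f s) (f t)) z l) : IsCycleAt B (f z) (l.map f) where
  nodup := (List.nodup_map_iff_inj_on h.nodup).2 fun _ hx _ hy => hf hx hy
  isChain := by simpa using (List.isChain_map f).2 h.isChain

lemma reverse (h : IsCycleAt (fun s t => A t s) z l) : IsCycleAt A z l.reverse where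
  nodup := by simpa using h.nodup
  isChain := by simpa using List.isChain_reverse.2 h.isChain

end IsCycleAt

lemma degreeIn_eq_sum_cycle_add [DecidableEq V] {s : Finset V} (hz : (z :: l).Nodup)
    (hs : ∀ v ∈ z :: l, v ∈ s) :
    degreeIn A u s = ind (A z u) + (l.map (arcs A u)).sum + ind (A u z) +
      degreeIn A u ↑(s \ (z :: l).toFinset) := by
  have hcycle : ∑ w ∈ (z :: l).toFinset, arcs A u w =
      ind (A u z) + ind (A z u) + (l.map (arcs A u)).sum := by
    rw [List.sum_toFinset (arcs A u) hz, List.map_cons, List.sum_cons, arcs]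
  rw [degreeIn_eq_sum, degreeIn_eq_sum, ← Finset.sum_sdiff (s₁ := (z :: l).toFinset)
    (fun v hv => hs v (List.mem_toFinset.1 hv)), hcycle]
  omega

lemma card_sdiff_cycle_add [DecidableEq V] {s : Finset V} (hz : (z :: l).Nodup)
    (hs : ∀ v ∈ z :: l, v ∈ s) :
    (s \ (z :: l).toFinset).card + (l.length + 1) = s.card := by
  rw [← List.length_cons (a := z), ← List.toFinset_card_of_nodup hz]
  exact Finset.card_sdiff_add_card_eq_card fun v hv => hs v (List.mem_toFinset.1 hv)

variable {s : Finset V}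

lemma degreeIn_add_length_le (hz : (z :: l).Nodup) (hs : ∀ v ∈ z :: l, v ∈ s)
    (hirr : ¬A u u) (hu : u ∈ s) (hul : u ∉ z :: l)
    (h : List.IsChain (fun s t => ¬(A s u ∧ A u t)) (z :: (l ++ [z]))) :
    degreeIn A u s + l.length + 3 ≤ 2 * s.card := by
  classical
  have hcycle := sum_arcs_le_length h
  have hrest := degreeIn_add_two_le_two_mul_card (s := s \ (z :: l).toFinset) hirr
    (by simp only [Finset.mem_sdiff, List.mem_toFinset]; exact ⟨hu, hul⟩)
  have hcard := card_sdiff_cycle_add hz hs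
  rw [degreeIn_eq_sum_cycle_add hz hs]
  omega

lemma complete_and_isChain_of_le_degreeIn (hz : (z :: l).Nodup) (hs : ∀ v ∈ z :: l, v ∈ s)
    (hirr : ¬A u u) (hu : u ∈ s) (hul : u ∉ z :: l)
    (h : List.IsChain (fun s t => ¬(A s u ∧ A u t)) (z :: (l ++ [z])))
    (hle : 2 * s.card ≤ degreeIn A u s + l.length + 3) :
    (∀ w ∈ s, w ∉ z :: l → w ≠ u → A u w ∧ A w u) ∧
      List.IsChain (fun s t => A s u ↔ ¬A u t) (z :: (l ++ [z])) := by
  classical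
  have hmem : ∀ {w}, w ∈ s \ (z :: l).toFinset ↔ w ∈ s ∧ w ∉ z :: l := by
    simp only [Finset.mem_sdiff, List.mem_toFinset, implies_true]
  have hcycle := sum_arcs_le_length h
  have hrest := degreeIn_add_two_le_two_mul_card hirr (hmem.2 ⟨hu, hul⟩)
  have hcard := card_sdiff_cycle_add hz hs
  rw [degreeIn_eq_sum_cycle_add hz hs] at hle
  exact ⟨fun w hw hwl => complete_of_two_mul_card_le hirr (hmem.2 ⟨hu, hul⟩) (by omega)
    (hmem.2 ⟨hw, hwl⟩), isChain_iff_not_of_length_le_sum_arcs h (by omega)⟩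

end Insertion

section Interval

variable {R S : ℕ → ℕ → Prop} {u p q r t : ℕ}

lemma degreeIn_Ico_add (R : ℕ → ℕ → Prop) (u : ℕ) (hpq : p ≤ q) (hqr : q ≤ r) :
    degreeIn R u ↑(Finset.Ico p q) + degreeIn R u ↑(Finset.Ico q r) =
      degreeIn R u ↑(Finset.Ico p r) := by
  simp only [degreeIn_eq_sum, Finset.sum_Ico_consecutive _ hpq hqr]

lemma degreeIn_Ico_succ (R : ℕ → ℕ → Prop) (u p : ℕ) :
    degreeIn R u ↑(Finset.Ico p (p + 1)) = arcs R u p := by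
  rw [Nat.Ico_succ_singleton, degreeIn_eq_sum, Finset.sum_singleton]

/-- A position `t` on a path of consecutive integers at which the vertex `u` misses both arcs
`t → u` and `u → t + 1`. -/
def IsGap (R : ℕ → ℕ → Prop) (u t : ℕ) : Prop := ¬R t u ∧ ¬R u (t + 1)

open Classical in
/-- The gaps of the vertex `u` on the path `p, p + 1, …, q`. -/
noncomputable def gaps (R : ℕ → ℕ → Prop) (u p q : ℕ) : Finset ℕ :=
  {t ∈ Finset.Ico p q | IsGap R u t}

lemma mem_gaps : t ∈ gaps R u p q ↔ (p ≤ t ∧ t < q) ∧ IsGap R u t := by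
  simp only [gaps, Finset.mem_filter, Finset.mem_Ico]

lemma card_gaps_succ (hpq : p ≤ q) :
    (gaps R u p (q + 1)).card = (gaps R u p q).card + ind (IsGap R u q) := by
  classical
  simp only [gaps, Finset.card_filter, Finset.sum_Ico_succ_top hpq, ind]

lemma degreeIn_add_card_gaps (hpq : p ≤ q)
    (hu : ∀ t, p ≤ t → t < q → ¬(R t u ∧ R u (t + 1))) :
    degreeIn R u ↑(Finset.Ico p (q + 1)) + (gaps R u p q).card =
      q - p + ind (R u p) + ind (R q u) := by
  induction q, hpq using Nat.le_induction with
  | base => simp only [degreeIn_Ico_succ, arcs, gaps, Finset.Ico_self, Finset.filter_empty,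
      Finset.card_empty, add_zero, Nat.sub_self, zero_add]
  | succ q hpq ih =>
    have hq := ind_add_ind_add_ind_neither (hu q hpq (by omega))
    have := ih fun t h1 h2 => hu t h1 (by omega)
    rw [← degreeIn_Ico_add R u (q := q + 1) (by omega) (by omega), degreeIn_Ico_succ, arcs,
      card_gaps_succ hpq, IsGap]
    omega

lemma iff_not_of_card_gaps_eq_zero (hu : ∀ t, p ≤ t → t < q → ¬(R t u ∧ R u (t + 1)))
    (hgaps : (gaps R u p q).card = 0) (hpt : p ≤ t) (htq : t < q) : R t u ↔ ¬R u (t + 1) := by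
  have hgap : ¬IsGap R u t := fun hgap =>
    Finset.notMem_empty t (Finset.card_eq_zero.1 hgaps ▸ mem_gaps.2 ⟨⟨hpt, htq⟩, hgap⟩)
  have := hu t hpt htq
  rw [IsGap] at hgap
  tauto

end Interval

section Segments

variable {S : ℕ → ℕ → Prop}

/-- The list of the integers of the interval `[I.1, I.2]`. -/
def interval (I : ℕ × ℕ) : List ℕ := List.range' I.1 (I.2 + 1 - I.1)

/-- The relation `S` holds at all junctions of the closed walk that arrives at `s`, then traverses
the intervals of the list in order, and ends at `0`. -/
def Junctions (S : ℕ → ℕ → Prop) : ℕ → List (ℕ × ℕ) → Prop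
  | s, [] => S s 0
  | s, I :: Is => S s I.1 ∧ Junctions S I.2 Is

/-- The relation `S` holds along each of the given intervals. -/
def Along (S : ℕ → ℕ → Prop) (Is : List (ℕ × ℕ)) : Prop :=
  ∀ I ∈ Is, ∀ s, I.1 ≤ s → s < I.2 → S s (s + 1)

/-- The intervals of the list are non-empty, pairwise disjoint, contained in `[0, n)`, and each of
them lies entirely in `[0, N]` or entirely beyond `N`. -/
structure IsSegmentation (n N : ℕ) (Is : List (ℕ × ℕ)) : Prop where
  valid : ∀ I ∈ Is, I.1 ≤ I.2 ∧ I.2 < n ∧ (I.2 ≤ N ∨ N < I.1)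
  pairwise : Is.Pairwise fun I J => I.2 < J.1 ∨ J.2 < I.1

lemma mem_interval {I : ℕ × ℕ} {s : ℕ} : s ∈ interval I ↔ I.1 ≤ s ∧ s ≤ I.2 := by
  simp only [interval, List.mem_range'_1]
  omega

lemma mem_flatMap_interval {Is : List (ℕ × ℕ)} {s : ℕ} :
    s ∈ Is.flatMap interval ↔ ∃ I ∈ Is, I.1 ≤ s ∧ s ≤ I.2 := by
  simp only [List.mem_flatMap, mem_interval]

lemma length_flatMap_interval (Is : List (ℕ × ℕ)) :
    (Is.flatMap interval).length = (Is.map fun I => I.2 + 1 - I.1).sum := by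
  simp only [List.length_flatMap, interval, List.length_range']

lemma isChain_range'_append (p m : ℕ) (l : List ℕ) :
    List.IsChain S (List.range' p (m + 1) ++ l) ↔
      (∀ s, p ≤ s → s < p + m → S s (s + 1)) ∧ List.IsChain S ((p + m) :: l) := by
  induction m generalizing p with
  | zero =>
    rw [zero_add, List.range'_one, List.singleton_append, add_zero]
    exact (and_iff_right fun s h1 h2 => by omega).symm
  | succ m ih =>
    rw [List.range'_succ, List.range'_succ, List.cons_append, List.cons_append,
      List.isChain_cons_cons, ← List.cons_append, ← List.range'_succ, ih, ← and_assoc,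
      show p + 1 + m = p + (m + 1) by omega]
    refine and_congr_left fun _ => ⟨fun ⟨hp, h⟩ s h1 h2 => ?_, fun h => ?_⟩
    · rcases h1.eq_or_lt with rfl | h1
      exacts [hp, h s h1 h2]
    · exact ⟨h p le_rfl (by omega), fun s h1 h2 => h s (by omega) h2⟩

lemma isChain_interval_append {I : ℕ × ℕ} (hI : I.1 ≤ I.2) (l : List ℕ) :
    List.IsChain S (interval I ++ l) ↔
      (∀ s, I.1 ≤ s → s < I.2 → S s (s + 1)) ∧ List.IsChain S (I.2 :: l) := by
  rw [interval, show I.2 + 1 - I.1 = (I.2 - I.1) + 1 by omega, isChain_range'_append,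
    show I.1 + (I.2 - I.1) = I.2 by omega]

lemma isChain_cons_interval_append {I : ℕ × ℕ} (hI : I.1 ≤ I.2) (s : ℕ) (l : List ℕ) :
    List.IsChain S (s :: (interval I ++ l)) ↔ S s I.1 ∧ List.IsChain S (interval I ++ l) := by
  rw [interval, show I.2 + 1 - I.1 = (I.2 - I.1) + 1 by omega, List.range'_succ, List.cons_append,
    List.isChain_cons_cons]

lemma isChain_cons_flatMap_interval {Is : List (ℕ × ℕ)} (h : ∀ I ∈ Is, I.1 ≤ I.2) (s : ℕ) :
    List.IsChain S (s :: (Is.flatMap interval ++ [0])) ↔ Along S Is ∧ Junctions S s Is := by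
  induction Is generalizing s with
  | nil => simp [Along, Junctions]
  | cons I Is ih =>
    obtain ⟨hI, hIs⟩ := List.forall_mem_cons.1 h
    rw [List.flatMap_cons, List.append_assoc, isChain_cons_interval_append hI,
      isChain_interval_append hI, ih hIs, Along, Along, List.forall_mem_cons, Junctions]
    tauto

lemma isChain_flatMap_interval {I : ℕ × ℕ} {Is : List (ℕ × ℕ)} (h : ∀ J ∈ I :: Is, J.1 ≤ J.2) :
    List.IsChain S ((I :: Is).flatMap interval ++ [0]) ↔
      Along S (I :: Is) ∧ Junctions S I.2 Is := by
  obtain ⟨hI, hIs⟩ := List.forall_mem_cons.1 h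
  rw [List.flatMap_cons, List.append_assoc, isChain_interval_append hI,
    isChain_cons_flatMap_interval hIs, Along, Along, List.forall_mem_cons, and_assoc]

lemma flatMap_interval_cons (t : ℕ) (Is : List (ℕ × ℕ)) :
    ((0, t) :: Is).flatMap interval = 0 :: (interval (1, t) ++ Is.flatMap interval) := by
  simp [interval, List.range'_succ]

lemma notMem_cycle_iff {t v : ℕ} {Is : List (ℕ × ℕ)} :
    v ∉ 0 :: (interval (1, t) ++ Is.flatMap interval) ↔
      ∀ I ∈ (0, t) :: Is, v < I.1 ∨ I.2 < v := by
  rw [← flatMap_interval_cons, mem_flatMap_interval, not_exists]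
  refine forall_congr' fun I => ?_
  rw [not_and]
  exact imp_congr_right fun _ => by omega

lemma length_cycle_add_one (t : ℕ) (Is : List (ℕ × ℕ)) :
    (interval (1, t) ++ Is.flatMap interval).length + 1 =
      (((0, t) :: Is).map fun I => I.2 + 1 - I.1).sum := by
  rw [← length_flatMap_interval, flatMap_interval_cons, List.length_cons]

lemma IsSegmentation.lt_of_mem {n N t v : ℕ} {Is : List (ℕ × ℕ)}
    (h : IsSegmentation n N ((0, t) :: Is)) (hv : v ∈ interval (1, t) ++ Is.flatMap interval) :
    v < n := by
  have hv := List.mem_cons_of_mem 0 hv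
  rw [← flatMap_interval_cons, mem_flatMap_interval] at hv
  obtain ⟨I, hI, -, hvI⟩ := hv
  exact hvI.trans_lt (h.valid I hI).2.1

lemma IsSegmentation.isCycleAt {n N t : ℕ} {Is : List (ℕ × ℕ)}
    (h : IsSegmentation n N ((0, t) :: Is)) (hA : Along S ((0, t) :: Is)) (hJ : Junctions S t Is) :
    IsCycleAt S 0 (interval (1, t) ++ Is.flatMap interval) where
  nodup := by
    rw [← flatMap_interval_cons]
    refine List.nodup_flatMap.2 ⟨fun I _ => List.nodup_range', h.pairwise.imp fun {I J} hIJ => ?_⟩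
    intro s hI hJ
    rw [mem_interval] at hI hJ
    omega
  isChain := by
    rw [← List.cons_append, ← flatMap_interval_cons]
    exact (isChain_flatMap_interval fun I hI => (h.valid I hI).1).2 ⟨hA, hJ⟩

end Segments

section Mirror

variable {N n t : ℕ}

/-- The involution of `ℕ` that reverses the path `1, …, N` and fixes all other numbers. -/
def mirror (N t : ℕ) : ℕ := if 1 ≤ t ∧ t ≤ N then N + 1 - t else t

lemma mirror_mirror (N t : ℕ) : mirror N (mirror N t) = t := by
  unfold mirror
  split_ifs <;> omega

lemma mirror_of_mem (ht1 : 1 ≤ t) (htN : t ≤ N) : mirror N t = N + 1 - t := if_pos ⟨ht1, htN⟩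

lemma mirror_of_gt (h : N < t) : mirror N t = t := if_neg (by omega)

lemma mirror_zero (N : ℕ) : mirror N 0 = 0 := if_neg (by omega)

lemma mirror_lt_iff (hN : N < n) : mirror N t < n ↔ t < n := by
  unfold mirror
  split_ifs <;> omega

lemma one_le_mirror : 1 ≤ mirror N t ↔ 1 ≤ t := by
  unfold mirror
  split_ifs <;> omega

lemma mirror_injective (N : ℕ) : Function.Injective (mirror N) :=
  Function.Involutive.injective (mirror_mirror N)

lemma degreeIn_reverse_mirror {R : ℕ → ℕ → Prop} {u : ℕ} (hN : N < n) :
    degreeIn (fun s t => R (mirror N t) (mirror N s)) u ↑(Finset.Ico 0 n) =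
      degreeIn R (mirror N u) ↑(Finset.Ico 0 n) := by
  have himage : mirror N '' ↑(Finset.Ico 0 n) = ↑(Finset.Ico 0 n) := by
    rw [Set.image_eq_preimage_of_inverse (mirror_mirror N) (mirror_mirror N)]
    ext t
    simp [mirror_lt_iff hN]
  conv_rhs => rw [← himage, degreeIn_image (mirror_injective N).injOn]
  exact degreeIn_reverse (fun s t => R (mirror N s) (mirror N t)) u _

end Mirror

/-- A non-Hamiltonian digraph on `[0, n)` with exceptional vertex `0`, whose vertices are numbered
in such a way that `0, 1, …, N` is a longest cycle through `0`. Deleting one vertex `e` leaves a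
strong digraph; this is stated as the existence of an arc out of every proper vertex set. -/
structure Counterexample (R : ℕ → ℕ → Prop) (k n N : ℕ) : Prop where
  degree_ge : ∀ u, 1 ≤ u → u < n → n + k ≤ degreeIn R u ↑(Finset.Ico 0 n)
  degree_zero_ge : n - k - 4 ≤ degreeIn R 0 ↑(Finset.Ico 0 n)
  irrefl : ∀ u, ¬R u u
  path : ∀ t, t < N → R t (t + 1)
  to_zero : R N 0
  strong : ∀ e, e < n → ∀ S : Set ℕ, (∃ u ∈ S, u < n ∧ u ≠ e) → (∃ v ∉ S, v < n ∧ v ≠ e) →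
    ∃ u ∈ S, ∃ v ∉ S, u < n ∧ v < n ∧ u ≠ e ∧ v ≠ e ∧ R u v
  bound : ∀ l, IsCycleAt R 0 l → (∀ t ∈ l, t < n) → l.length ≤ N
  one_le : 1 ≤ N
  lt : N + 1 < n
  le_add : n - k - 2 ≤ N + 1

namespace Counterexample

variable {R : ℕ → ℕ → Prop} {k n N u t : ℕ} {Is : List (ℕ × ℕ)}

lemma not_insertable (h : Counterexample R k n N) {l : List ℕ} (hl : IsCycleAt R 0 l)
    (hln : ∀ t ∈ l, t < n) (hN : N ≤ l.length) (hu : u < n) (hul : u ∉ 0 :: l) :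
    List.IsChain (fun s t => ¬(R s u ∧ R u t)) (0 :: (l ++ [0])) := by
  by_contra hins
  obtain ⟨l', hperm, hl'⟩ := exists_perm_cons_isChain hl.isChain hins
  have hnodup : (0 :: l').Nodup :=
    ((hperm.cons 0).trans (.swap u 0 l)).nodup_iff.2 (List.nodup_cons.2 ⟨hul, hl.nodup⟩)
  have := h.bound l' ⟨hnodup, hl'⟩ fun t ht => by
    rcases List.mem_cons.1 (hperm.mem_iff.1 ht) with rfl | ht
    exacts [hu, hln t ht]
  have := hperm.length_eq
  rw [List.length_cons] at this
  omega

lemma saturated (h : Counterexample R k n N) {l : List ℕ} (hl : IsCycleAt R 0 l)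
    (hln : ∀ t ∈ l, t < n) (hN : N ≤ l.length) (hu : u < n) (hul : u ∉ 0 :: l) :
    n = N + k + 3 ∧ (∀ v < n, v ∉ 0 :: l → v ≠ u → R u v ∧ R v u) ∧
      List.IsChain (fun s t => R s u ↔ ¬R u t) (0 :: (l ++ [0])) := by
  have := h.le_add
  have hmem {v : ℕ} : v ∈ Finset.Ico 0 n ↔ v < n := by simp only [Finset.mem_Ico, zero_le, true_and]
  have hs : ∀ v ∈ 0 :: l, v ∈ Finset.Ico 0 n :=
    List.forall_mem_cons.2 ⟨hmem.2 (by omega), fun v hv => hmem.2 (hln v hv)⟩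
  have hchain := h.not_insertable hl hln hN hu hul
  have hu0 : u ≠ 0 := fun hu0 => hul (hu0 ▸ List.mem_cons_self)
  have hdeg := h.degree_ge u (by omega) hu
  have hcard : (Finset.Ico 0 n).card = n := by simp
  have hup := degreeIn_add_length_le hl.nodup hs (h.irrefl u) (hmem.2 hu) hul hchain
  obtain ⟨hcomplete, hslots⟩ := complete_and_isChain_of_le_degreeIn hl.nodup hs (h.irrefl u)
    (hmem.2 hu) hul hchain (by omega)
  exact ⟨by omega, fun v hv => hcomplete v (hmem.2 hv), hslots⟩

lemma saturated_intervals (h : Counterexample R k n N) (hs : IsSegmentation n N ((0, t) :: Is))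
    (hA : Along R ((0, t) :: Is)) (hJ : Junctions R t Is)
    (hlen : N + 1 ≤ (((0, t) :: Is).map fun I => I.2 + 1 - I.1).sum) (hu : u < n)
    (hu' : ∀ I ∈ (0, t) :: Is, u < I.1 ∨ I.2 < u) :
    n = N + k + 3 ∧
      (∀ v < n, (∀ I ∈ (0, t) :: Is, v < I.1 ∨ I.2 < v) → v ≠ u → R u v ∧ R v u) ∧
      Along (fun s v => R s u ↔ ¬R u v) ((0, t) :: Is) ∧
      Junctions (fun s v => R s u ↔ ¬R u v) t Is := by
  rw [← length_cycle_add_one] at hlen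
  obtain ⟨hn, hcomplete, hslots⟩ := h.saturated (hs.isCycleAt hA hJ) (fun v => hs.lt_of_mem)
    (by omega) hu (notMem_cycle_iff.2 hu')
  rw [← List.cons_append, ← flatMap_interval_cons] at hslots
  exact ⟨hn, fun v hv hv' => hcomplete v hv (notMem_cycle_iff.2 hv'),
    (isChain_flatMap_interval fun I hI => (hs.valid I hI).1).1 hslots⟩

lemma saturated_base (h : Counterexample R k n N) (hNu : N < u) (hu : u < n) :
    n = N + k + 3 ∧ (∀ v, N < v → v < n → v ≠ u → R u v ∧ R v u) ∧
      (∀ t < N, R t u ↔ ¬R u (t + 1)) ∧ (R N u ↔ ¬R u 0) := by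
  have hmem {v : ℕ} : (∀ I ∈ [(0, N)], v < I.1 ∨ I.2 < v) ↔ N < v := by simp
  have hvalid : ∀ I ∈ [(0, N)], I.1 ≤ I.2 ∧ I.2 < n ∧ (I.2 ≤ N ∨ N < I.1) :=
    List.forall_mem_singleton.2 ⟨N.zero_le, hNu.trans hu, .inl le_rfl⟩
  obtain ⟨hn, hcomplete, hA, hJ⟩ := h.saturated_intervals (t := N) (Is := []) (u := u)
    ⟨hvalid, List.pairwise_singleton _ _⟩ (by simpa [Along] using h.path) h.to_zero
    (by simp) hu (hmem.2 hNu)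
  exact ⟨hn, fun v hv hvn => hcomplete v hvn (hmem.2 hv), by simpa [Along] using hA, hJ⟩

lemma card_eq (h : Counterexample R k n N) : n = N + k + 3 :=
  (h.saturated_base (Nat.lt_succ_self N) h.lt).1

lemma block_complete (h : Counterexample R k n N) {b c : ℕ} (hb : N < b) (hbn : b < n)
    (hc : N < c) (hcn : c < n) (hbc : b ≠ c) : R b c :=
  ((h.saturated_base hb hbn).2.1 c hc hcn hbc.symm).1

lemma along (h : Counterexample R k n N) (hs : IsSegmentation n N Is) : Along R Is := by
  intro I hI s h1 h2
  obtain ⟨-, hn, hN | hN⟩ := hs.valid I hI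
  · exact h.path s (by omega)
  · exact h.block_complete (by omega) (by omega) (by omega) (by omega) (by omega)

-- Only the arcs of a cycle that join two intervals have to be supplied: those inside an interval
-- are arcs of the path `0, …, N` or of the complete block beyond `N`.
lemma false_of_cycle (h : Counterexample R k n N) (t : ℕ) (Is : List (ℕ × ℕ))
    (hJ : Junctions R t Is)
    (hs : IsSegmentation n N ((0, t) :: Is) := by
      constructor <;> simp only [List.forall_mem_cons, List.pairwise_cons, List.not_mem_nil,
        IsEmpty.forall_iff, implies_true, and_true, List.Pairwise.nil] <;> omega)
    (hlen : N + 1 < (((0, t) :: Is).map fun I => I.2 + 1 - I.1).sum := by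
      simp only [List.map_cons, List.map_nil, List.sum_cons, List.sum_nil]; omega) :
    False := by
  have hbound := h.bound _ (hs.isCycleAt (h.along hs) hJ) fun v => hs.lt_of_mem
  rw [← length_cycle_add_one] at hlen
  omega

lemma slots (h : Counterexample R k n N) (t : ℕ) (Is : List (ℕ × ℕ)) (u : ℕ)
    (hJ : Junctions R t Is)
    (hs : IsSegmentation n N ((0, t) :: Is) := by
      constructor <;> simp only [List.forall_mem_cons, List.pairwise_cons, List.not_mem_nil,
        IsEmpty.forall_iff, implies_true, and_true, List.Pairwise.nil] <;> omega)
    (hlen : N + 1 ≤ (((0, t) :: Is).map fun I => I.2 + 1 - I.1).sum := by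
      simp only [List.map_cons, List.map_nil, List.sum_cons, List.sum_nil]; omega)
    (hu : u < n := by omega)
    (hu' : ∀ I ∈ (0, t) :: Is, u < I.1 ∨ I.2 < u := by
      simp only [List.forall_mem_cons, List.not_mem_nil, IsEmpty.forall_iff, implies_true,
        and_true]; omega) :
    Along (fun s v => R s u ↔ ¬R u v) ((0, t) :: Is) ∧
      Junctions (fun s v => R s u ↔ ¬R u v) t Is :=
  (h.saturated_intervals hs (h.along hs) hJ hlen hu hu').2.2

section Threshold

lemma to_block_of_to_block (h : Counterexample R k n N) {v w : ℕ} (hv : N < v) (hvn : v < n)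
    (hw : N < w) (hwn : w < n) (ht : t ≤ N) (htv : R t v) : R t w := by
  rcases eq_or_ne v w with rfl | hvw
  · exact htv
  have hvw' : R v w := h.block_complete hv hvn hw hwn hvw
  obtain ⟨-, -, hslots, hlast⟩ := h.saturated_base hw hwn
  by_contra htw
  rcases ht.eq_or_lt with rfl | ht
  · exact h.false_of_cycle t [(v, v), (w, w)] ⟨htv, hvw', not_not.1 (mt hlast.2 htw)⟩
  · exact h.false_of_cycle t [(v, v), (w, w), (t + 1, N)]
      ⟨htv, hvw', not_not.1 (mt (hslots t ht).2 htw), h.to_zero⟩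

lemma to_block_iff (h : Counterexample R k n N) {b : ℕ} (hb : N < b) (hbn : b < n) (ht : t ≤ N) :
    R t b ↔ R t (N + 1) :=
  ⟨h.to_block_of_to_block hb hbn N.lt_succ_self h.lt ht,
    h.to_block_of_to_block N.lt_succ_self h.lt hb hbn ht⟩

lemma from_block_succ_iff (h : Counterexample R k n N) {b : ℕ} (hb : N < b) (hbn : b < n)
    (ht : t < N) : R b (t + 1) ↔ ¬R t (N + 1) := by
  rw [← h.to_block_iff hb hbn ht.le, (h.saturated_base hb hbn).2.2.1 t ht, not_not]

lemma from_block_zero_iff (h : Counterexample R k n N) {b : ℕ} (hb : N < b) (hbn : b < n) :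
    R b 0 ↔ ¬R N (N + 1) := by
  rw [← h.to_block_iff hb hbn le_rfl, (h.saturated_base hb hbn).2.2.2, not_not]

lemma to_block_succ (h : Counterexample R k n N) (ht : t < N) (htb : R t (N + 1)) :
    R (t + 1) (N + 1) := by
  have hn := h.card_eq
  by_contra hsucc
  rcases (show t + 1 = N ∨ t + 1 < N by omega) with rfl | htN
  · rw [← h.from_block_zero_iff (b := n - 1) (by omega) (by omega)] at hsucc
    exact h.false_of_cycle t [(t + 1 + 1, n - 1)] ⟨htb, hsucc⟩
  · rw [← h.from_block_succ_iff (b := n - 1) (by omega) (by omega) htN] at hsucc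
    exact h.false_of_cycle t [(N + 1, n - 1), (t + 2, N)] ⟨htb, hsucc, h.to_zero⟩

lemma to_block_mono (h : Counterexample R k n N) {s : ℕ} (hst : s ≤ t) (ht : t ≤ N)
    (hR : R s (N + 1)) : R t (N + 1) := by
  induction t, hst using Nat.le_induction with
  | base => exact hR
  | succ t _ ih => exact h.to_block_succ (by omega) (ih (by omega))

lemma exists_le_ne (hN : 1 ≤ N) (e : ℕ) : ∃ s ≤ N, s ≠ e := by
  rcases eq_or_ne e 0 with rfl | he
  exacts [⟨1, hN, one_ne_zero⟩, ⟨0, N.zero_le, he.symm⟩]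

lemma exists_to_block (h : Counterexample R k n N) {e : ℕ} (he : e ≤ N) :
    ∃ t ≤ N, t ≠ e ∧ R t (N + 1) := by
  have hlt := h.lt
  obtain ⟨s, hs, hse⟩ := exists_le_ne h.one_le e
  obtain ⟨t, ht, b, hb, -, hbn, hte, -, htb⟩ := h.strong e (by omega) (Set.Iic N)
    ⟨s, hs, by omega, hse⟩ ⟨N + 1, by simp, by omega, by omega⟩
  rw [Set.mem_Iic] at ht hb
  exact ⟨t, ht, hte, (h.to_block_iff (by omega) hbn ht).1 htb⟩

lemma exists_from_block (h : Counterexample R k n N) {e : ℕ} (he : e ≤ N) :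
    ∃ b t, N < b ∧ b < n ∧ t ≤ N ∧ t ≠ e ∧ R b t := by
  have hlt := h.lt
  obtain ⟨s, hs, hse⟩ := exists_le_ne h.one_le e
  obtain ⟨b, hb, t, ht, hbn, -, -, hte, hbt⟩ := h.strong e (by omega) (Set.Ioi N)
    ⟨N + 1, by simp, by omega, by omega⟩ ⟨s, by simpa using hs, by omega, hse⟩
  rw [Set.mem_Ioi] at hb
  rw [Set.mem_Ioi, not_lt] at ht
  exact ⟨b, t, hb, hbn, ht, hte, hbt⟩

lemma last_to_block (h : Counterexample R k n N) : R N (N + 1) := by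
  obtain ⟨t, ht, -, htb⟩ := h.exists_to_block (Nat.zero_le N)
  exact h.to_block_mono ht le_rfl htb

lemma not_from_block_zero (h : Counterexample R k n N) {b : ℕ} (hb : N < b) (hbn : b < n) :
    ¬R b 0 := fun hb0 =>
  (h.from_block_zero_iff hb hbn).1 hb0 h.last_to_block

lemma not_zero_to_block (h : Counterexample R k n N) : ¬R 0 (N + 1) := by
  intro h0
  obtain ⟨b, t, hb, hbn, ht, -, hbt⟩ := h.exists_from_block (Nat.zero_le N)
  rcases t with _ | t
  · exact h.not_from_block_zero hb hbn hbt
  · exact (h.from_block_succ_iff hb hbn ht).1 hbt (h.to_block_mono t.zero_le (by omega) h0)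

lemma exists_threshold (h : Counterexample R k n N) :
    ∃ a, 2 ≤ a ∧ a < N ∧ ∀ t ≤ N, R t (N + 1) ↔ a ≤ t := by
  classical
  obtain ⟨a, ha, hmin⟩ := Nat.findX (p := fun t => R t (N + 1)) ⟨N, h.last_to_block⟩
  have haN : a ≤ N := not_lt.1 fun hlt => hmin N hlt h.last_to_block
  refine ⟨a, not_lt.1 fun ha2 => ?_, ?_, fun t ht =>
    ⟨fun hR => not_lt.1 fun hlt => hmin t hlt hR, fun hat => h.to_block_mono hat ht ha⟩⟩
  · have : a ≠ 0 := fun ha0 => h.not_zero_to_block (ha0 ▸ ha)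
    obtain ⟨b, t, hb, hbn, ht, ht1, hbt⟩ := h.exists_from_block h.one_le
    rcases t with _ | t
    · exact h.not_from_block_zero hb hbn hbt
    · exact (h.from_block_succ_iff hb hbn ht).1 hbt (h.to_block_mono (by omega) (by omega) ha)
  · obtain ⟨t, ht, htN, htb⟩ := h.exists_to_block le_rfl
    have : a ≤ t := not_lt.1 fun hlt => hmin t hlt htb
    omega

end Threshold

section Reverse

lemma exists_reverse_mirror_arc (h : Counterexample R k n N) {e : ℕ} (he : e < n) {S : Set ℕ}
    (hS : ∃ u ∈ S, u < n ∧ u ≠ e) (hS' : ∃ v ∉ S, v < n ∧ v ≠ e) :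
    ∃ u ∈ S, ∃ v ∉ S, u < n ∧ v < n ∧ u ≠ e ∧ v ≠ e ∧ R (mirror N v) (mirror N u) := by
  have hN : N < n := N.lt_succ_self.trans h.lt
  obtain ⟨v, hvS, hv, hve⟩ := hS
  obtain ⟨w, hwS, hw, hwe⟩ := hS'
  obtain ⟨x, hx, y, hy, hxn, hyn, hxe, hye, hxy⟩ := h.strong (mirror N e)
    ((mirror_lt_iff hN).2 he) {t | mirror N t ∉ S}
    ⟨mirror N w, by simpa [mirror_mirror] using hwS, (mirror_lt_iff hN).2 hw,
      (mirror_injective N).ne hwe⟩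
    ⟨mirror N v, by simpa [mirror_mirror] using hvS, (mirror_lt_iff hN).2 hv,
      (mirror_injective N).ne hve⟩
  refine ⟨mirror N y, by simpa using hy, mirror N x, hx, (mirror_lt_iff hN).2 hyn,
    (mirror_lt_iff hN).2 hxn, ?_, ?_, by simpa [mirror_mirror] using hxy⟩
  · rintro rfl
    exact hye (mirror_mirror N y).symm
  · rintro rfl
    exact hxe (mirror_mirror N x).symm

lemma reverse (h : Counterexample R k n N) :
    Counterexample (fun s t => R (mirror N t) (mirror N s)) k n N where
  degree_ge v hv hvn := by
    rw [degreeIn_reverse_mirror h.lt.le]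
    exact h.degree_ge _ (one_le_mirror.2 hv) ((mirror_lt_iff (by have := h.lt; omega)).2 hvn)
  degree_zero_ge := by
    rw [degreeIn_reverse_mirror h.lt.le, mirror_zero]
    exact h.degree_zero_ge
  irrefl v := h.irrefl _
  path t ht := by
    rcases Nat.eq_zero_or_pos t with rfl | ht0
    · rw [mirror_zero, mirror_of_mem le_rfl (by omega)]
      exact h.to_zero
    · rw [mirror_of_mem ht0 ht.le, mirror_of_mem (by omega) ht,
        show N + 1 - t = N + 1 - (t + 1) + 1 by omega]
      exact h.path _ (by omega)
  to_zero := by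
    rw [mirror_zero, mirror_of_mem h.one_le le_rfl, Nat.add_sub_cancel_left]
    exact h.path 0 h.one_le
  strong _ he _ := h.exists_reverse_mirror_arc he
  bound l hl hln := by
    have hmap := (hl.map (B := fun s t => R t s) (mirror_injective N).injOn).reverse
    rw [mirror_zero] at hmap
    have := h.bound _ hmap fun t ht => by
      obtain ⟨s, hs, rfl⟩ := List.mem_map.1 (List.mem_reverse.1 ht)
      exact (mirror_lt_iff (by have := h.lt; omega)).2 (hln s hs)
    simpa using this
  one_le := h.one_le
  lt := h.lt
  le_add := h.le_add

end Reverse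

end Counterexample

/-- A counterexample with `n = N + k + 3` vertices together with the threshold `a` at which the
longest cycle splits: the block `B` of vertices beyond `N` is dominated by `[a, N]`, dominates
`[1, a]`, and has no further arcs to or from the cycle. -/
structure SplitConfig (R : ℕ → ℕ → Prop) (k N a : ℕ) : Prop
    extends Counterexample R k (N + k + 3) N where
  two_le : 2 ≤ a
  lt_N : a < N
  to_block : ∀ b t, N < b → b < N + k + 3 → t ≤ N → (R t b ↔ a ≤ t)
  from_block : ∀ b t, N < b → b < N + k + 3 → 1 ≤ t → t ≤ N → (R b t ↔ t ≤ a)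
  not_block_zero : ∀ b, N < b → b < N + k + 3 → ¬R b 0

lemma Counterexample.exists_splitConfig {R : ℕ → ℕ → Prop} {k n N : ℕ}
    (h : Counterexample R k n N) : ∃ a, SplitConfig R k N a := by
  obtain rfl := h.card_eq
  obtain ⟨a, ha2, haN, ha⟩ := h.exists_threshold
  refine ⟨a, h, ha2, haN, fun b t hb hbn ht => (h.to_block_iff hb hbn ht).trans (ha t ht),
    fun b t hb hbn ht1 ht => ?_, fun b hb hbn => h.not_from_block_zero hb hbn⟩
  obtain ⟨t, rfl⟩ := Nat.exists_eq_add_of_le' ht1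
  rw [h.from_block_succ_iff hb hbn ht, ha t (by omega)]
  omega

namespace SplitConfig

variable {R : ℕ → ℕ → Prop} {k N a : ℕ}

lemma to_first (h : SplitConfig R k N a) {t : ℕ} (hat : a ≤ t) (ht : t ≤ N) : R t (N + 1) :=
  (h.to_block _ t (by omega) (by omega) ht).2 hat

lemma from_last (h : SplitConfig R k N a) {t : ℕ} (ht1 : 1 ≤ t) (hta : t ≤ a) :
    R (N + k + 2) t :=
  (h.from_block _ t (by omega) (by omega) ht1 (by have := h.lt_N; omega)).2 hta

lemma last_to_first (h : SplitConfig R k N a) : R N (N + 1) := h.to_first h.lt_N.le le_rfl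

lemma last_to_one (h : SplitConfig R k N a) : R (N + k + 2) 1 :=
  h.from_last le_rfl (by have := h.two_le; omega)

lemma not_zero_block (h : SplitConfig R k N a) {b : ℕ} (hb : N < b) (hbn : b < N + k + 3) :
    ¬R 0 b := fun h0 => by
  have := (h.to_block b 0 hb hbn N.zero_le).1 h0
  have := h.two_le
  omega

lemma le_of_arc (h : SplitConfig R k N a) {t v : ℕ} (hta : t < a) (hv : v < N + k + 3)
    (htv : R t v) : v ≤ N := by
  by_contra hvN
  have := h.lt_N
  have := (h.to_block v t (by omega) hv (by omega)).1 htv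
  omega

section Gaps

lemma not_zero_insertable (h : SplitConfig R k N a) {t : ℕ} (ht1 : 1 ≤ t) (htN : t < N) :
    ¬(R t 0 ∧ R 0 (t + 1)) := fun ⟨ht0, h0t⟩ =>
  h.false_of_cycle 0 [(t + 1, N), (N + 1, N + k + 2), (1, t)]
    ⟨h0t, h.last_to_first, h.last_to_one, ht0⟩

lemma degreeIn_zero_eq (h : SplitConfig R k N a) :
    degreeIn R 0 ↑(Finset.Ico 0 (N + k + 3)) = degreeIn R 0 ↑(Finset.Ico 1 (N + 1)) := by
  have hself : degreeIn R 0 ↑(Finset.Ico 0 1) = 0 :=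
    degreeIn_eq_zero fun y hy => by
      obtain rfl : y = 0 := by simpa using hy
      exact ⟨h.irrefl 0, h.irrefl 0⟩
  have hblock : degreeIn R 0 ↑(Finset.Ico (N + 1) (N + k + 3)) = 0 :=
    degreeIn_eq_zero fun y hy => by
      rw [Finset.mem_Ico] at hy
      exact ⟨h.not_zero_block hy.1 hy.2, h.not_block_zero y hy.1 hy.2⟩
  rw [← degreeIn_Ico_add R 0 (q := 1) (by omega) (by omega), hself,
    ← degreeIn_Ico_add R 0 (p := 1) (q := N + 1) (by omega) (by omega), hblock]
  omega

lemma card_gaps_zero_le (h : SplitConfig R k N a) : (gaps R 0 1 N).card ≤ 2 := by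
  have hdeg := h.degree_zero_ge
  rw [h.degreeIn_zero_eq] at hdeg
  have := degreeIn_add_card_gaps h.one_le fun t ht1 htN => h.not_zero_insertable ht1 htN
  have := ind_le_one (R 0 1)
  have := ind_le_one (R N 0)
  omega

lemma not_three_gaps (h : SplitConfig R k N a) {s t v : ℕ} (hs : 1 ≤ s) (hst : s < t) (htv : t < v)
    (hv : v < N) (hgs : IsGap R 0 s) (hgt : IsGap R 0 t) (hgv : IsGap R 0 v) : False := by
  have hcard : 2 < (gaps R 0 1 N).card := Finset.two_lt_card.2
    ⟨s, mem_gaps.2 ⟨by omega, hgs⟩, t, mem_gaps.2 ⟨by omega, hgt⟩, v, mem_gaps.2 ⟨by omega, hgv⟩,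
      by omega, by omega, by omega⟩
  have := h.card_gaps_zero_le
  omega

end Gaps

section Jump

variable {l r s : ℕ}

lemma jump_not_to_zero (h : SplitConfig R k N a) (hla : l < a) (hls : l < s) (hsr : s < r)
    (hrs : r ≤ s + k + 2) (hr : r ≤ N) (hjump : R l r) : ¬R s 0 := fun hs0 =>
  h.false_of_cycle l [(r, N), (N + 1, N + k + 2), (l + 1, s)]
    ⟨hjump, h.last_to_first, h.from_last (by omega) (by omega), hs0⟩

lemma jump_not_from_zero (h : SplitConfig R k N a) (hl : 1 ≤ l) (hla : l < a) (har : a < r)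
    (hr : r ≤ N) (hjump : R l r) : ¬R 0 (l + 1) := fun h0 =>
  h.false_of_cycle 0 [(l + 1, r - 1), (N + 1, N + k + 2), (1, l), (r, N)]
    ⟨h0, h.to_first (by omega) (by omega), h.last_to_one, hjump, h.to_zero⟩

lemma exists_arc_of_zero (h : SplitConfig R k N a) {e : ℕ} (he : 1 ≤ e) (heN : e ≤ N) :
    ∃ v, 1 ≤ v ∧ v ≤ N ∧ v ≠ e ∧ R 0 v := by
  obtain ⟨u, rfl, v, hv, -, hvn, -, hve, h0v⟩ := h.strong e (by omega) {0}
    ⟨0, rfl, by omega, by omega⟩ ⟨N + 1, by simp, by omega, by omega⟩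
  have hv0 : v ≠ 0 := by simpa using hv
  exact ⟨v, by omega, h.le_of_arc (by have := h.two_le; omega) hvn h0v, hve, h0v⟩

lemma exists_arc_of_init (h : SplitConfig R k N a) {e : ℕ} (he : 2 ≤ e) (hea : e ≤ a) :
    ∃ t v, 1 ≤ t ∧ t < e ∧ v ≤ N ∧ R t v ∧ (v = 0 ∨ e < v) := by
  have := h.lt_N
  obtain ⟨t, ⟨ht1, hte⟩, v, hv, -, hvn, -, hve, htv⟩ := h.strong e (by omega) (Set.Ico 1 e)
    ⟨1, ⟨le_rfl, he⟩, by omega, by omega⟩ ⟨0, by simp, by omega, by omega⟩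
  rw [Set.mem_Ico, not_and, not_lt] at hv
  exact ⟨t, v, ht1, hte, h.le_of_arc (by omega) hvn htv, htv, by omega⟩

lemma exists_jump (h : SplitConfig R k N a) :
    ∃ l r, 1 ≤ l ∧ l < a ∧ a < r ∧ r ≤ N ∧ (R l r ∨ R l 0 ∧ R 0 r) := by
  have ha := h.two_le
  have hN := h.lt_N
  obtain ⟨l, v, hl, hla, hvN, hlv, rfl | hav⟩ := h.exists_arc_of_init ha le_rfl
  · obtain ⟨w, hw, r, hr, -, hrn, -, hra, hwr⟩ := h.strong a (by omega) (Set.Iio a)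
      ⟨1, ha, by omega, by omega⟩ ⟨N, by simpa using hN.le, by omega, by omega⟩
    rw [Set.mem_Iio] at hw hr
    have hrN := h.le_of_arc hw hrn hwr
    rcases Nat.eq_zero_or_pos w with rfl | hw0
    · exact ⟨l, r, hl, hla, by omega, hrN, .inr ⟨hlv, hwr⟩⟩
    · exact ⟨w, r, hw0, hw, by omega, hrN, .inl hwr⟩
  · exact ⟨l, v, hl, hla, hav, hvN, .inl hlv⟩

end Jump

section Monotone

variable {e : ℕ}

lemma exists_first_to_zero (h : SplitConfig R k N a)
    (hmono : ∀ i j, 1 ≤ i → i < j → j ≤ N → R i 0 → ¬R 0 j) (he1 : 1 ≤ e) (hea : e ≤ a)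
    (he : R e 0) : ∃ d, 2 ≤ d ∧ d ≤ a ∧ R d 0 ∧ ∀ t, 1 ≤ t → t < d → ¬R t 0 := by
  classical
  obtain ⟨d, ⟨hd1, hd⟩, hmin⟩ := Nat.findX (p := fun d => 1 ≤ d ∧ R d 0) ⟨e, he1, he⟩
  have hde : d ≤ e := not_lt.1 fun hlt => hmin e hlt ⟨he1, he⟩
  refine ⟨d, ?_, hde.trans hea, hd, fun t ht1 htd ht => hmin t htd ⟨ht1, ht⟩⟩
  by_contra hd2
  obtain ⟨v, hv1, hvN, hv, h0v⟩ := h.exists_arc_of_zero le_rfl h.one_le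
  exact hmono d v hd1 (by omega) hvN hd h0v

lemma false_of_to_zero_le (h : SplitConfig R k N a)
    (hmono : ∀ i j, 1 ≤ i → i < j → j ≤ N → R i 0 → ¬R 0 j) (he1 : 1 ≤ e) (hea : e ≤ a)
    (he : R e 0) : False := by
  obtain ⟨d, hd2, hda, hd, hmin⟩ := h.exists_first_to_zero hmono he1 hea he
  have hfrom (v : ℕ) (hdv : d < v) (hvN : v ≤ N) : ¬R 0 v := hmono d v (by omega) hdv hvN hd
  obtain ⟨t, p, ht1, htd, hpN, htp, rfl | hdp⟩ := h.exists_arc_of_init hd2 hda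
  · exact hmin t ht1 htd htp
  have hpred : ¬R (p - 1) 0 :=
    h.jump_not_to_zero (by omega) (by omega) (by omega) (by omega) hpN htp
  have : p - 1 ≠ d := fun hp => hpred (hp ▸ hd)
  have hpred' : ¬R (p - 2) 0 :=
    h.jump_not_to_zero (by omega) (by omega) (by omega) (by omega) hpN htp
  have : p - 2 ≠ d := fun hp => hpred' (hp ▸ hd)
  have hgap : IsGap R 0 (p - 1) := ⟨hpred, hfrom _ (by omega) (by omega)⟩
  have hgap' : IsGap R 0 (p - 2) := ⟨hpred', hfrom _ (by omega) (by omega)⟩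
  have hpa : p ≤ a := by
    by_contra hap
    exact h.not_three_gaps ht1 (by omega) (by omega) (by omega)
      ⟨hmin t ht1 htd, h.jump_not_from_zero ht1 (by omega) (by omega) hpN htp⟩ hgap' hgap
  obtain ⟨l, r, hl, hla, har, hrN, hlr | ⟨hl0, h0r⟩⟩ := h.exists_jump
  · exact h.not_three_gaps (by omega) (by omega) (by omega : p - 1 < r - 1) (by omega) hgap' hgap
      ⟨h.jump_not_to_zero hla (by omega) (by omega) (by omega) hrN hlr,
        hfrom _ (by omega) (by omega)⟩
  · exact hmono l r hl (by omega) hrN hl0 h0r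

lemma eq_of_separated_jump (h : SplitConfig R k N a) (hto : ∀ t, 1 ≤ t → t ≤ a → ¬R t 0)
    (hfrom : ∀ t, a ≤ t → t ≤ N → ¬R 0 t) {l r : ℕ} (hl : 1 ≤ l) (hla : l < a) (har : a < r)
    (hrN : r ≤ N) (hjump : R l r) : l = a - 1 ∧ r = a + 1 := by
  have hgap : IsGap R 0 (a - 1) := ⟨hto _ (by omega) (by omega), hfrom _ (by omega) (by omega)⟩
  have hgap' : IsGap R 0 a := ⟨hto _ (by omega) le_rfl, hfrom _ (by omega) (by omega)⟩
  constructor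
  · by_contra hne
    exact h.not_three_gaps hl (by omega) (by omega) (by omega)
      ⟨hto _ hl hla.le, h.jump_not_from_zero hl hla har hrN hjump⟩ hgap hgap'
  · by_contra hne
    exact h.not_three_gaps (by omega) (by omega) (by omega : a < r - 1) (by omega) hgap hgap'
      ⟨h.jump_not_to_zero hla (by omega) (by omega) (by omega) hrN hjump,
        hfrom _ (by omega) (by omega)⟩

lemma false_of_separated (h : SplitConfig R k N a) (hto : ∀ t, 1 ≤ t → t ≤ a → ¬R t 0)
    (hfrom : ∀ t, a ≤ t → t ≤ N → ¬R 0 t) : False := by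
  have ha2 := h.two_le
  have haN := h.lt_N
  obtain ⟨l, r, hl, hla, har, hrN, hjump | ⟨hl0, -⟩⟩ := h.exists_jump
  swap
  · exact hto l hl hla.le hl0
  obtain ⟨rfl, rfl⟩ := h.eq_of_separated_jump hto hfrom hl hla har hrN hjump
  obtain ⟨v, hv1, hvN, hv, h0v⟩ := h.exists_arc_of_zero le_rfl h.one_le
  have hva : v < a := not_le.1 fun hav => hfrom v hav hvN h0v
  obtain ⟨t, p, ht1, hta, hpN, htp, rfl | hap⟩ :=
    h.exists_arc_of_init (e := a - 1) (by omega) (by omega)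
  · exact hto t ht1 (by omega) htp
  rcases (show p = a ∨ a < p by omega) with rfl | hap
  · exact h.false_of_cycle t [(p, p), (N + 1, N + k + 2), (t + 1, p - 1), (p + 1, N)]
      ⟨htp, h.to_first le_rfl haN.le, h.from_last (by omega) (by omega), hjump, h.to_zero⟩
  · have := (h.eq_of_separated_jump hto hfrom ht1 (by omega) hap hpN htp).1
    omega

end Monotone

lemma reverse (h : SplitConfig R k N a) :
    SplitConfig (fun s t => R (mirror N t) (mirror N s)) k N (N + 1 - a) where
  toCounterexample := h.toCounterexample.reverse
  two_le := by have := h.lt_N; omega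
  lt_N := by have := h.two_le; have := h.lt_N; omega
  to_block b t hb hbn ht := by
    have := h.lt_N
    rcases Nat.eq_zero_or_pos t with rfl | ht0
    · rw [mirror_of_gt hb, mirror_zero]
      exact iff_of_false (h.not_block_zero b hb hbn) (by omega)
    · rw [mirror_of_gt hb, mirror_of_mem ht0 ht, h.from_block b _ hb hbn (by omega) (by omega)]
      omega
  from_block b t hb hbn ht1 ht := by
    rw [mirror_of_gt hb, mirror_of_mem ht1 ht, h.to_block b _ hb hbn (by omega)]
    omega
  not_block_zero b hb hbn := by
    rw [mirror_of_gt hb, mirror_zero]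
    exact h.not_zero_block hb hbn

lemma exists_detour (h : SplitConfig R k N a) :
    ∃ i j, 1 ≤ i ∧ i < j ∧ j ≤ N ∧ R i 0 ∧ R 0 j := by
  by_contra! hmono
  have ha2 := h.two_le
  refine h.false_of_separated (fun t ht1 hta ht => h.false_of_to_zero_le hmono ht1 hta ht)
    fun t hat htN ht => ?_
  refine h.reverse.false_of_to_zero_le (e := N + 1 - t) (fun i j hi hij hj => ?_)
    (by omega) (by omega) ?_
  · rw [mirror_zero, mirror_of_mem hi (by omega), mirror_of_mem (by omega) hj]
    exact fun h0i hj0 => hmono _ _ (by omega) (by omega) (by omega) hj0 h0i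
  · rw [mirror_zero, mirror_of_mem (by omega) (by omega), show N + 1 - (N + 1 - t) = t by omega]
    exact ht

end SplitConfig

/-- A pair `i < j` of consecutive neighbours of `0` on the longest cycle such that `0` can be
bypassed: the paths `0, j, …, N` and `1, …, i, 0` avoid the vertices strictly between `i` and
`j`. -/
structure Detour (R : ℕ → ℕ → Prop) (k N a i j : ℕ) : Prop extends SplitConfig R k N a where
  one_le_left : 1 ≤ i
  left_add_two_le : i + 2 ≤ j
  right_le : j ≤ N
  left_to_zero : R i 0
  zero_to_right : R 0 j
  not_to_zero : ∀ t, i < t → t < j → ¬R t 0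
  not_zero_to : ∀ t, i < t → t < j → ¬R 0 t

lemma SplitConfig.exists_minimal_detour {R : ℕ → ℕ → Prop} {k N a : ℕ}
    (h : SplitConfig R k N a) : ∃ i j, Detour R k N a i j := by
  obtain ⟨i, j, hi, hij, hj, hi0, h0j⟩ := h.exists_detour
  induction hd : j - i using Nat.strong_induction_on generalizing i j with
  | _ d ih =>
    by_cases hex : ∃ t, i < t ∧ t < j ∧ (R t 0 ∨ R 0 t)
    · obtain ⟨t, hit, htj, ht0 | h0t⟩ := hex
      · exact ih (j - t) (by omega) t j (by omega) htj hj ht0 h0j rfl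
      · exact ih (t - i) (by omega) i t hi hit (by omega) hi0 h0t rfl
    · push Not at hex
      refine ⟨i, j, h, hi, not_lt.1 fun hlt => ?_, hj, hi0, h0j,
        fun t hit htj => (hex t hit htj).1, fun t hit htj => (hex t hit htj).2⟩
      obtain rfl : j = i + 1 := by omega
      exact h.not_zero_insertable hi (by omega) ⟨hi0, h0j⟩

namespace Detour

variable {R : ℕ → ℕ → Prop} {k N a i j : ℕ}

lemma isGap (d : Detour R k N a i j) {t : ℕ} (hit : i < t) (htj : t + 1 < j) : IsGap R 0 t :=
  ⟨d.not_to_zero t hit (by omega), d.not_zero_to _ (by omega) htj⟩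

lemma left_add_le (d : Detour R k N a i j) : i + k + 3 ≤ j := by
  have := d.one_le_left
  have := d.left_add_two_le
  have := d.right_le
  by_contra hlt
  exact d.false_of_cycle 0 [(j, N), (N + 1, N + k + 2), (1, i)]
    ⟨d.zero_to_right, d.last_to_first, d.last_to_one, d.left_to_zero⟩

lemma right_le_add (d : Detour R k N a i j) : j ≤ i + 4 := by
  have := d.right_le
  by_contra hlt
  exact d.not_three_gaps (by omega) (by omega) (by omega) (by omega)
    (d.isGap (t := i + 1) (by omega) (by omega)) (d.isGap (t := i + 2) (by omega) (by omega))
    (d.isGap (t := i + 3) (by omega) (by omega))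

lemma le_left_or_right_le (d : Detour R k N a i j) : a ≤ i ∨ j ≤ a := by
  have := d.one_le_left
  have := d.right_le
  by_contra! hlt
  exact d.false_of_cycle 0 [(j, N), (N + 1, N + 1), (i + 1, j - 1), (N + 2, N + k + 2), (1, i)]
    ⟨d.zero_to_right, d.last_to_first,
      (d.from_block _ _ (by omega) (by omega) (by omega) (by omega)).2 (by omega),
      (d.to_block _ _ (by omega) (by omega) (by omega)).2 (by omega),
      d.last_to_one, d.left_to_zero⟩

lemma reverse (d : Detour R k N a i j) :
    Detour (fun s t => R (mirror N t) (mirror N s)) k N (N + 1 - a) (N + 1 - j) (N + 1 - i) := by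
  have := d.one_le_left
  have := d.left_add_two_le
  have := d.right_le
  refine ⟨d.toSplitConfig.reverse, by omega, by omega, by omega, ?_, ?_, fun t hit htj => ?_,
    fun t hit htj => ?_⟩
  · rw [mirror_zero, mirror_of_mem (by omega) (by omega), show N + 1 - (N + 1 - j) = j by omega]
    exact d.zero_to_right
  · rw [mirror_zero, mirror_of_mem (by omega) (by omega), show N + 1 - (N + 1 - i) = i by omega]
    exact d.left_to_zero
  · rw [mirror_zero, mirror_of_mem (by omega) (by omega)]
    exact d.not_zero_to _ (by omega) (by omega)
  · rw [mirror_zero, mirror_of_mem (by omega) (by omega)]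
    exact d.not_to_zero _ (by omega) (by omega)

end Detour

/-- A detour that lies entirely in the part `[a, N]` of the cycle dominating the block. -/
structure LateDetour (R : ℕ → ℕ → Prop) (k N a i j : ℕ) : Prop extends Detour R k N a i j where
  le_left : a ≤ i

namespace LateDetour

variable {R : ℕ → ℕ → Prop} {k N a i j v w t : ℕ}

lemma mid_to_first (d : LateDetour R k N a i j) (hiv : i < v) (hvj : v < j) : R v (N + 1) :=
  d.to_first (by have := d.le_left; omega) (by have := d.right_le; omega)

lemma not_block_mid (d : LateDetour R k N a i j) {b : ℕ} (hb : N < b) (hbn : b < N + k + 3)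
    (hav : a < v) (hvj : v < j) : ¬R b v := fun hbv => by
  have := d.right_le
  have := (d.from_block b v hb hbn (by omega) (by omega)).1 hbv
  omega

lemma le_degreeIn (d : LateDetour R k N a i j) (hiv : i < v) (hvj : v < j) :
    N + k + 1 ≤ degreeIn R v ↑(Finset.Ico 1 (i + 1)) + degreeIn R v ↑(Finset.Ico (i + 1) j) +
      degreeIn R v ↑(Finset.Ico j (N + 1)) := by
  have := d.le_left
  have := d.right_le
  have hzero : degreeIn R v ↑(Finset.Ico 0 1) = 0 :=
    degreeIn_eq_zero fun t ht => by
      obtain rfl : t = 0 := by simpa using ht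
      exact ⟨d.not_to_zero v hiv hvj, d.not_zero_to v hiv hvj⟩
  have hblock : degreeIn R v ↑(Finset.Ico (N + 1) (N + k + 3)) ≤ k + 2 := by
    refine (degreeIn_le_card fun b hb => ?_).trans (by rw [Nat.card_Ico]; omega)
    rw [Finset.mem_Ico] at hb
    exact d.not_block_mid hb.1 hb.2 (by omega) hvj
  have hdeg := d.degree_ge v (by omega) (by omega)
  rw [← degreeIn_Ico_add R v (q := 1) (by omega) (by omega), hzero,
    ← degreeIn_Ico_add R v (q := i + 1) (by omega) (by omega),
    ← degreeIn_Ico_add R v (p := i + 1) (q := j) (by omega) (by omega),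
    ← degreeIn_Ico_add R v (p := j) (q := N + 1) (by omega) (by omega)] at hdeg
  omega

section Long

lemma exists_init_to_zero (d : LateDetour R k N a i j) (hj : j = i + 4) :
    ∃ l, 1 ≤ l ∧ l < a ∧ R l 0 := by
  have := d.le_left
  have := d.right_le
  obtain ⟨l, r, hl, hla, har, hrN, hlr | ⟨hl0, -⟩⟩ := d.exists_jump
  · refine ⟨l, hl, hla, by_contra fun hl0 => ?_⟩
    exact d.not_three_gaps hl (by omega) (by omega) (by omega)
      ⟨hl0, d.jump_not_from_zero hl hla har hrN hlr⟩
      (d.isGap (t := i + 1) (by omega) (by omega)) (d.isGap (t := i + 2) (by omega) (by omega))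
  · exact ⟨l, hl, hla, hl0⟩

lemma not_to_one (d : LateDetour R k N a i j) (hj : j = i + 4) (hiv : i < v) (hvj : v < j) :
    ¬R v 1 := by
  have := d.le_left
  have := d.right_le
  obtain ⟨l, hl, hla, hl0⟩ := d.exists_init_to_zero hj
  have hlast : R (N + k + 2) (l + 1) := d.from_last (by omega) (by omega)
  intro hv1
  rcases (show i + 1 < v ∨ v = i + 1 by omega) with hv | rfl
  · exact d.false_of_cycle 0 [(j, N), (N + 1, N + k + 2), (l + 1, v), (1, l)]
      ⟨d.zero_to_right, d.last_to_first, hlast, hv1, hl0⟩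
  · obtain ⟨-, -, -, -, -, hslot⟩ := d.slots 0
      [(j, N), (N + 1, N + k + 2), (l + 1, i + 1), (1, l)] (i + 2)
      ⟨d.zero_to_right, d.last_to_first, hlast, hv1, hl0⟩
    exact d.false_of_cycle l [(i + 2, N), (N + 1, N + k + 2), (l + 1, i)]
      ⟨hslot.2 (d.not_to_zero _ (by omega) (by omega)), d.last_to_first, hlast, d.left_to_zero⟩

end Long

section Insertion

lemma exists_ne_mid (d : LateDetour R k N a i j) (v : ℕ) : ∃ u, i < u ∧ u < j ∧ u ≠ v := by
  have := d.left_add_le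
  rcases eq_or_ne v (i + 1) with rfl | hv
  exacts [⟨i + 2, by omega⟩, ⟨i + 1, by omega⟩]

lemma lt_or_eq (d : LateDetour R k N a i j) : j < i + k + 4 ∨ j = i + 4 := by
  have := d.right_le_add
  omega

lemma left_not_insertable (d : LateDetour R k N a i j) (ht : 1 ≤ t) (hti : t < i) (hiv : i < v)
    (hvj : v < j) : ¬(R t v ∧ R v (t + 1)) := fun ⟨htv, hvt⟩ => by
  have := d.le_left
  have := d.right_le
  obtain ⟨u, hiu, huj, huv⟩ := d.exists_ne_mid v
  rcases d.lt_or_eq with hj | hj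
  · exact d.false_of_cycle 0 [(j, N), (N + 1, N + k + 2), (1, t), (v, v), (t + 1, i)]
      ⟨d.zero_to_right, d.last_to_first, d.last_to_one, htv, hvt, d.left_to_zero⟩
  · obtain ⟨-, -, -, hslot, -⟩ := d.slots 0
      [(j, N), (N + 1, N + k + 2), (1, t), (v, v), (t + 1, i)] u
      ⟨d.zero_to_right, d.last_to_first, d.last_to_one, htv, hvt, d.left_to_zero⟩
    exact d.not_block_mid (by omega) (by omega) (by omega) huj
      (hslot.2 (d.not_to_one hj hiu huj))

lemma right_not_insertable (d : LateDetour R k N a i j) (hjt : j ≤ t) (htN : t < N) (hiv : i < v)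
    (hvj : v < j) : ¬(R t v ∧ R v (t + 1)) := fun ⟨htv, hvt⟩ => by
  have := d.le_left
  have := d.one_le_left
  obtain ⟨u, hiu, huj, huv⟩ := d.exists_ne_mid v
  rcases d.lt_or_eq with hj | hj
  · exact d.false_of_cycle 0 [(j, t), (v, v), (t + 1, N), (N + 1, N + k + 2), (1, i)]
      ⟨d.zero_to_right, htv, hvt, d.last_to_first, d.last_to_one, d.left_to_zero⟩
  · obtain ⟨-, -, -, -, -, hslot, -⟩ := d.slots 0
      [(j, t), (v, v), (t + 1, N), (N + 1, N + k + 2), (1, i)] u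
      ⟨d.zero_to_right, htv, hvt, d.last_to_first, d.last_to_one, d.left_to_zero⟩
    exact d.not_block_mid (by omega) (by omega) (by omega) huj
      (hslot.2 (d.not_to_one hj hiu huj))

lemma not_last_to_mid (d : LateDetour R k N a i j) (hiv : i < v) (hvj : v < j) : ¬R N v :=
    fun hNv => by
  have := d.le_left
  have := d.one_le_left
  have := d.right_le
  obtain ⟨u, hiu, huj, huv⟩ := d.exists_ne_mid v
  rcases d.lt_or_eq with hj | hj
  · exact d.false_of_cycle 0 [(j, N), (v, v), (N + 1, N + k + 2), (1, i)]
      ⟨d.zero_to_right, hNv, d.mid_to_first hiv hvj, d.last_to_one, d.left_to_zero⟩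
  · obtain ⟨-, -, -, -, hslot, -⟩ := d.slots 0 [(j, N), (v, v), (N + 1, N + k + 2), (1, i)] u
      ⟨d.zero_to_right, hNv, d.mid_to_first hiv hvj, d.last_to_one, d.left_to_zero⟩
    exact d.not_block_mid (by omega) (by omega) (by omega) huj
      (hslot.2 (d.not_to_one hj hiu huj))

end Insertion

/-- The forced adjacencies of a vertex `v` strictly between the ends `i` and `j` of a late
detour. -/
structure Attached (R : ℕ → ℕ → Prop) (N i j v : ℕ) : Prop where
  complete : ∀ t, i < t → t < j → t ≠ v → R t v
  from_left : R i v
  left : ∀ t, 1 ≤ t → t < i → (R t v ↔ ¬R v (t + 1))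
  right : ∀ t, j ≤ t → t < N → (R t v ↔ ¬R v (t + 1))
  to_one : j < i + 4 → R v 1

lemma attached (d : LateDetour R k N a i j) (hiv : i < v) (hvj : v < j) :
    Attached R N i j v := by
  have := d.one_le_left
  have := d.right_le_add
  have := d.right_le
  have hleft {t : ℕ} (ht : 1 ≤ t) (hti : t < i) := d.left_not_insertable ht hti hiv hvj
  have hright {t : ℕ} (hjt : j ≤ t) (htN : t < N) := d.right_not_insertable hjt htN hiv hvj
  have hmid : v ∈ Finset.Ico (i + 1) j := Finset.mem_Ico.2 ⟨hiv, hvj⟩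
  have hdegLeft := degreeIn_add_card_gaps d.one_le_left fun t => hleft (t := t)
  have hdegMid := degreeIn_add_two_le_two_mul_card (d.irrefl v) hmid
  have hdegRight := degreeIn_add_card_gaps d.right_le fun t => hright (t := t)
  have hdeg := d.le_degreeIn hiv hvj
  have hcard : (Finset.Ico (i + 1) j).card = j - (i + 1) := Nat.card_Ico _ _
  have hone : j + ind (R v 1) ≤ i + k + 4 := by
    rcases (show j = i + 4 ∨ j < i + 4 by omega) with hj | hj
    · rw [ind_of_not (d.not_to_one hj hiv hvj)]
      omega
    · have := ind_le_one (R v 1)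
      omega
  have := ind_le_one (R i v)
  have := ind_le_one (R v j)
  rw [ind_of_not (d.not_last_to_mid hiv hvj)] at hdegRight
  -- The degree of `v` is so large that all of these estimates are equalities.
  exact
    { complete t hit htj htv := (complete_of_two_mul_card_le (d.irrefl v) hmid (by omega)
        (Finset.mem_Ico.2 ⟨hit, htj⟩) htv).2
      from_left := one_le_ind.1 (by omega)
      left t ht hti := iff_not_of_card_gaps_eq_zero (fun t => hleft (t := t)) (by omega) ht hti
      right t hjt htN :=
        iff_not_of_card_gaps_eq_zero (fun t => hright (t := t)) (by omega) hjt htN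
      to_one hj := one_le_ind.1 (by omega) }

section Uniform

lemma left_uniform (d : LateDetour R k N a i j) (ht : 1 ≤ t) (hti : t ≤ i) (hiv : i < v)
    (hvj : v < j) (hiw : i < w) (hwj : w < j) (htv : R t v) : R t w := by
  have := d.right_le
  have := d.right_le_add
  have hw := d.attached hiw hwj
  rcases eq_or_ne v w with rfl | hvw
  · exact htv
  rcases hti.eq_or_lt with rfl | hti
  · exact hw.from_left
  by_contra htw
  rw [hw.left t ht hti, not_not] at htw
  exact d.false_of_cycle 0 [(j, N), (N + 1, N + k + 2), (1, t), (v, v), (w, w), (t + 1, i)]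
    ⟨d.zero_to_right, d.last_to_first, d.last_to_one, htv, hw.complete v hiv hvj hvw, htw,
      d.left_to_zero⟩

lemma right_uniform (d : LateDetour R k N a i j) (hjt : j ≤ t) (htN : t ≤ N) (hiv : i < v)
    (hvj : v < j) (hiw : i < w) (hwj : w < j) (htv : R t v) : R t w := by
  have := d.one_le_left
  have := d.right_le_add
  have hw := d.attached hiw hwj
  rcases eq_or_ne v w with rfl | hvw
  · exact htv
  rcases htN.eq_or_lt with rfl | htN
  · exact absurd htv (d.not_last_to_mid hiv hvj)
  by_contra htw
  rw [hw.right t hjt htN, not_not] at htw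
  exact d.false_of_cycle 0 [(j, t), (v, v), (w, w), (t + 1, N), (N + 1, N + k + 2), (1, i)]
    ⟨d.zero_to_right, htv, hw.complete v hiv hvj hvw, htw, d.last_to_first, d.last_to_one,
      d.left_to_zero⟩

lemma right_succ (d : LateDetour R k N a i j) (hjt : j ≤ t) (htN : t < N) (ht : R t (i + 1)) :
    R (t + 1) (i + 1) := by
  have := d.one_le_left
  have := d.left_add_le
  rcases (show t + 1 = N ∨ t + 1 < N by omega) with rfl | htN
  · exact (d.false_of_cycle 0 [(j, t), (i + 1, j - 1), (t + 2, t + 1 + k + 2), (1, i)]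
      ⟨d.zero_to_right, ht, d.mid_to_first (by omega) (by omega),
        d.last_to_one, d.left_to_zero⟩).elim
  · refine d.right_uniform (v := j - 1) (by omega) htN.le (by omega) (by omega) (by omega)
      (by omega) ?_
    rw [(d.attached (v := j - 1) (by omega) (by omega)).right _ (by omega) htN]
    intro hsucc
    exact d.false_of_cycle 0 [(j, t), (i + 1, j - 1), (t + 2, N), (N + 1, N + k + 2), (1, i)]
      ⟨d.zero_to_right, ht, hsucc, d.last_to_first, d.last_to_one, d.left_to_zero⟩

lemma not_right_to_mid (d : LateDetour R k N a i j) (hjt : j ≤ t) (htN : t ≤ N) (hiv : i < v)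
    (hvj : v < j) : ¬R t v := fun htv => by
  have ht := d.right_uniform hjt htN hiv hvj (w := i + 1) (by omega) (by omega) htv
  have hmono : ∀ s, t ≤ s → s ≤ N → R s (i + 1) := fun s hts => by
    induction s, hts using Nat.le_induction with
    | base => exact fun _ => ht
    | succ s hts ih => exact fun hs => d.right_succ (by omega) hs (ih (by omega))
  exact d.not_last_to_mid (by omega) (by omega) (hmono N htN le_rfl)

lemma left_succ (d : LateDetour R k N a i j) (ht : 1 ≤ t) (hti : t < i) (hR : R t (i + 1)) :
    R (t + 1) (i + 1) := by
  have := d.right_le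
  have := d.left_add_le
  have hlast := d.attached (v := j - 1) (by omega) (by omega)
  refine d.left_uniform (v := j - 1) (by omega) hti (by omega) (by omega) (by omega) (by omega) ?_
  rcases (show t + 1 = i ∨ t + 1 < i by omega) with rfl | hti
  · exact hlast.from_left
  rw [hlast.left _ (by omega) hti]
  intro hsucc
  exact d.false_of_cycle 0 [(j, N), (N + 1, N + k + 2), (1, t), (i + 1, j - 1), (t + 2, i)]
    ⟨d.zero_to_right, d.last_to_first, d.last_to_one, hR, hsucc, d.left_to_zero⟩

end Uniform

section Crossing

variable {c p u : ℕ}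

lemma exists_left_threshold (d : LateDetour R k N a i j) :
    ∃ c, a ≤ c ∧ c ≤ i ∧ (∀ t, c ≤ t → t ≤ i → R t (i + 1)) ∧
      ∀ t v, 1 ≤ t → t < c → i < v → v < j → ¬R t v := by
  classical
  have := d.le_left
  have := d.right_le
  have := d.left_add_le
  have hi := (d.attached (v := i + 1) (by omega) (by omega)).from_left
  obtain ⟨c, ⟨hc1, hc⟩, hmin⟩ :=
    Nat.findX (p := fun t => 1 ≤ t ∧ R t (i + 1)) ⟨i, d.one_le_left, hi⟩
  have hci : c ≤ i := not_lt.1 fun hlt => hmin i hlt ⟨d.one_le_left, hi⟩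
  refine ⟨c, not_lt.1 fun hca => ?_, hci, fun t hct hti => ?_, fun t v ht htc hiv hvj htv =>
    hmin t htc ⟨ht, d.left_uniform ht (by omega) hiv hvj (by omega) (by omega) htv⟩⟩
  · exact d.false_of_cycle c [(i + 1, N), (N + 1, N + k + 2), (c + 1, i)]
      ⟨hc, d.last_to_first, d.from_last (by omega) (by omega), d.left_to_zero⟩
  · induction t, hct using Nat.le_induction with
    | base => exact hc
    | succ t hct ih => exact d.left_succ (by omega) (by omega) (ih (by omega))

lemma exists_crossing (d : LateDetour R k N a i j) (hac : a ≤ c) (hci : c ≤ i)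
    (hc : ∀ t v, 1 ≤ t → t < c → i < v → v < j → ¬R t v) :
    ∃ u p, u < N + k + 3 ∧ (u < c ∨ j ≤ u) ∧ c < p ∧ p ≤ i ∧ R u p := by
  have := d.two_le
  have := d.right_le
  have := d.left_add_le
  obtain ⟨u, hu, p, hp, hun, -, huc, -, hup⟩ := d.strong c (by omega) {t | ¬(c < t ∧ t < j)}
    ⟨0, by simp, by omega, by omega⟩ ⟨i + 1, fun hi => hi ⟨by omega, by omega⟩, by omega, by omega⟩
  rw [Set.mem_ofPred_eq, not_not] at hp
  rw [Set.mem_ofPred_eq] at hu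
  refine ⟨u, p, hun, by omega, hp.1, not_lt.1 fun hip => ?_, hup⟩
  rcases (show u = 0 ∨ (1 ≤ u ∧ u < c) ∨ (j ≤ u ∧ u ≤ N) ∨ N < u by omega) with
    rfl | ⟨hu1, huc⟩ | ⟨hju, huN⟩ | huN
  · exact d.not_zero_to p hip hp.2 hup
  · exact hc u p hu1 huc hip hp.2 hup
  · exact d.not_right_to_mid hju huN hip hp.2 hup
  · exact d.not_block_mid huN hun (by omega) hp.2 hup

lemma not_crossing_pred_to_zero (d : LateDetour R k N a i j) (hac : a ≤ c)
    (hc : ∀ t v, 1 ≤ t → t < c → i < v → v < j → ¬R t v) (hun : u < N + k + 3)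
    (hu : u < c ∨ j ≤ u) (hcp : c < p) (hpi : p ≤ i) (hup : R u p) (h0p : ¬R 0 p) :
    ¬R (p - 1) 0 := fun hp0 => by
  have := d.two_le
  have := d.right_le
  have := d.left_add_le
  have hlast := d.attached (v := j - 1) (by omega) (by omega)
  rcases (show u = 0 ∨ (1 ≤ u ∧ u < c) ∨ (j ≤ u ∧ u < N) ∨ u = N ∨ N < u by omega) with
    rfl | ⟨hu1, huc⟩ | ⟨hju, huN⟩ | rfl | huN
  · exact h0p hup
  · have hslot : R (j - 1) (u + 1) := not_not.1 <|
      mt (hlast.left u hu1 (by omega)).2 (hc u _ hu1 huc (by omega) (by omega))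
    exact d.false_of_cycle 0 [(j, N), (N + 1, N + k + 2), (1, u), (p, j - 1), (u + 1, p - 1)]
      ⟨d.zero_to_right, d.last_to_first, d.last_to_one, hup, hslot, hp0⟩
  · have hslot : R (j - 1) (u + 1) := not_not.1 <|
      mt (hlast.right u hju huN).2 (d.not_right_to_mid hju huN.le (by omega) (by omega))
    exact d.false_of_cycle 0 [(j, u), (p, j - 1), (u + 1, N), (N + 1, N + k + 2), (1, p - 1)]
      ⟨d.zero_to_right, hup, hslot, d.last_to_first, d.last_to_one, hp0⟩
  · exact d.false_of_cycle 0 [(j, u), (p, j - 1), (u + 1, u + k + 2), (1, p - 1)]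
      ⟨d.zero_to_right, hup, d.mid_to_first (by omega) (by omega), d.last_to_one, hp0⟩
  · exact d.not_block_mid huN hun (by omega) (by omega) hup

lemma exists_isGap (d : LateDetour R k N a i j) : ∃ t, a ≤ t ∧ t < i ∧ IsGap R 0 t := by
  have := d.two_le
  have := d.right_le
  have := d.left_add_le
  obtain ⟨c, hac, hci, hafter, hbefore⟩ := d.exists_left_threshold
  obtain ⟨u, p, hun, hu, hcp, hpi, hup⟩ := d.exists_crossing hac hci hbefore
  have h0p : ¬R 0 p := fun h0p =>
    d.false_of_cycle 0 [(p, i), (N + 1, N + k + 2), (1, p - 1), (i + 1, N)]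
      ⟨h0p, d.to_first d.le_left (by omega), d.last_to_one,
        hafter _ (by omega) (by omega), d.to_zero⟩
  refine ⟨p - 1, by omega, by omega,
    d.not_crossing_pred_to_zero hac hbefore hun hu hcp hpi hup h0p, ?_⟩
  rwa [show p - 1 + 1 = p by omega]

end Crossing

lemma not_init_to_zero (d : LateDetour R k N a i j) (hj : j < i + 4) {l : ℕ} (hl : 1 ≤ l)
    (hla : l < a) : ¬R l 0 := fun hl0 => by
  have := d.le_left
  have := d.right_le
  have := d.left_add_le
  have hlast := d.attached (v := j - 1) (by omega) (by omega)
  exact d.false_of_cycle 0 [(j, N), (N + 1, N + k + 2), (l + 1, j - 1), (1, l)]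
    ⟨d.zero_to_right, d.last_to_first, d.from_last (by omega) (by omega), hlast.to_one hj, hl0⟩

protected lemma false (d : LateDetour R k N a i j) : False := by
  have := d.two_le
  have := d.right_le
  have := d.left_add_le
  have := d.right_le_add
  obtain ⟨t, hat, hti, ht⟩ := d.exists_isGap
  have hgap := d.isGap (t := i + 1) (by omega) (by omega)
  rcases (show j = i + 4 ∨ j < i + 4 by omega) with hj | hj
  · exact d.not_three_gaps (by omega) (by omega) (by omega) (by omega) ht hgap
      (d.isGap (t := i + 2) (by omega) (by omega))
  obtain ⟨l, r, hl, hla, har, hrN, hlr | ⟨hl0, -⟩⟩ := d.exists_jump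
  · exact d.not_three_gaps hl (by omega) (by omega) (by omega)
      ⟨d.not_init_to_zero hj hl hla, d.jump_not_from_zero hl hla har hrN hlr⟩ ht hgap
  · exact d.not_init_to_zero hj hl hla hl0

end LateDetour

protected lemma SplitConfig.false {R : ℕ → ℕ → Prop} {k N a : ℕ} (h : SplitConfig R k N a) :
    False := by
  obtain ⟨i, j, d⟩ := h.exists_minimal_detour
  rcases d.le_left_or_right_le with hai | hja
  · exact LateDetour.false ⟨d, hai⟩
  · exact LateDetour.false ⟨d.reverse, by omega⟩

protected lemma Counterexample.false {R : ℕ → ℕ → Prop} {k n N : ℕ}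
    (h : Counterexample R k n N) : False := by
  obtain ⟨a, ha⟩ := h.exists_splitConfig
  exact ha.false

section Enumeration

variable {V : Type*} {A : V → V → Prop} {z : V} {l : List V}

lemma exists_nodup_append_forall_mem [Finite V] (hl : l.Nodup) :
    ∃ l', (l ++ l').Nodup ∧ ∀ v, v ∈ l ++ l' := by
  classical
  have := Fintype.ofFinite V
  have hmem : ∀ {v}, v ∈ (Finset.univ \ l.toFinset).toList ↔ v ∉ l := by simp
  refine ⟨(Finset.univ \ l.toFinset).toList, ?_, fun v => ?_⟩
  · exact hl.append (Finset.nodup_toList _) fun v hv hv' => hmem.1 hv' hv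
  · exact List.mem_append.2 ((em (v ∈ l)).imp_right hmem.2)

lemma bijOn_getD (hl : l.Nodup) (hmem : ∀ v, v ∈ l) (z : V) :
    Set.BijOn (fun t => l.getD t z) ↑(Finset.Ico 0 l.length) Set.univ := by
  refine ⟨Set.mapsTo_univ _ _, fun s hs t ht hst => ?_, fun v _ => ?_⟩
  · rw [Finset.mem_coe, Finset.mem_Ico] at hs ht
    simp only [List.getD_eq_getElem _ _ hs.2, List.getD_eq_getElem _ _ ht.2] at hst
    exact hl.getElem_inj_iff.1 hst
  · obtain ⟨t, ht, rfl⟩ := List.mem_iff_getElem.1 (hmem v)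
    exact ⟨t, by simpa using ht, List.getD_eq_getElem _ _ ht⟩

lemma length_eq_card_of_nodup_of_forall_mem [Fintype V] (hl : l.Nodup) (hmem : ∀ v, v ∈ l) :
    l.length = Fintype.card V := by
  classical
  rw [← List.toFinset_card_of_nodup hl, Finset.card_eq_iff_eq_univ]
  exact Finset.eq_univ_iff_forall.2 fun v => List.mem_toFinset.2 (hmem v)

lemma isChain_iff_getD (l : List V) (z : V) :
    List.IsChain A l ↔ ∀ t, t + 1 < l.length → A (l.getD t z) (l.getD (t + 1) z) := by
  rw [List.isChain_iff_getElem]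
  refine forall_congr' fun t => forall_congr' fun ht => ?_
  rw [List.getD_eq_getElem, List.getD_eq_getElem]

/-- `y 0, …, y (n - 1)` lists all vertices, without repetition, and `y 0, …, y N` is a closed walk
in this order. -/
structure CycleEnum (A : V → V → Prop) (n N : ℕ) (y : ℕ → V) : Prop where
  bijOn : Set.BijOn y ↑(Finset.Ico 0 n) Set.univ
  path : ∀ t < N, A (y t) (y (t + 1))
  closed : A (y N) (y 0)

lemma IsCycle.exists_isCycleAt {m : ℕ} {c : Fin m → V} (h : IsCycle A c) (i : Fin m) :
    ∃ l, IsCycleAt A (c i) l ∧ l.length + 1 = m := by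
  obtain ⟨-, hinj, hA⟩ := h
  let f : ℕ → V := fun s => c ⟨(i + s) % m, Nat.mod_lt _ i.pos⟩
  have hstep : ∀ s, A (f s) (f (s + 1)) := fun s => by
    simpa only [Nat.mod_add_mod, add_assoc] using hA ⟨(i + s) % m, Nat.mod_lt _ i.pos⟩
  have hfinj : Set.InjOn f {s | s < m} := fun s hs t ht hst =>
    (Nat.ModEq.add_left_cancel' (i : ℕ) (Fin.mk.inj (hinj hst))).eq_of_lt_of_lt hs ht
  have hf0 : f 0 = c i := congrArg c (Fin.ext (Nat.mod_eq_of_lt i.isLt))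
  obtain ⟨t, rfl⟩ := Nat.exists_eq_add_of_le' i.pos
  have hft : f (t + 1) = f 0 := congrArg c (Fin.ext (by simp))
  have hseg : IsSegmentation (t + 1) t [(0, t)] := ⟨by simp, by simp⟩
  have hclose : Junctions (fun s t => A (f s) (f t)) t [] := show A (f t) (f 0) from hft ▸ hstep t
  have hcycle : IsCycleAt (fun s t => A (f s) (f t)) 0 (interval (1, t)) := by
    simpa only [List.flatMap_nil, List.append_nil] using
      hseg.isCycleAt (fun _ _ s _ _ => hstep s) hclose
  refine ⟨(interval (1, t)).map f, hf0 ▸ hcycle.map (hfinj.mono fun s hs => ?_), ?_⟩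
  · rcases List.mem_cons.1 hs with rfl | hs
    exacts [Nat.succ_pos t, Nat.lt_succ_of_le (mem_interval.1 hs).2]
  · simp [interval]

namespace IsCycleAt

lemma exists_longest [Finite V] (h : IsCycleAt A z l) :
    ∃ l', IsCycleAt A z l' ∧ ∀ l'', IsCycleAt A z l'' → l''.length ≤ l'.length := by
  have := Fintype.ofFinite V
  have hfin : {l' | IsCycleAt A z l'}.Finite :=
    (List.finite_length_le V (Fintype.card V)).subset fun l' hl' =>
      (List.nodup_cons.1 hl'.nodup).2.length_le_card
  obtain ⟨l', hl', hmax⟩ := Set.exists_max_image _ List.length hfin ⟨l, h⟩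
  exact ⟨l', hl', hmax⟩

lemma exists_cycleEnum [Fintype V] (h : IsCycleAt A z l) :
    ∃ y, CycleEnum A (Fintype.card V) l.length y ∧ y 0 = z := by
  obtain ⟨l', hnd, hmem⟩ := exists_nodup_append_forall_mem h.nodup
  have hget : ∀ t ≤ l.length, ((z :: l) ++ l').getD t z = (z :: (l ++ [z])).getD t z := by
    intro t ht
    rw [← List.cons_append, List.getD_append _ _ _ _ (by simpa using ht),
      List.getD_append _ _ _ _ (by simpa using ht)]
  have hchain : ∀ t ≤ l.length,
      A ((z :: (l ++ [z])).getD t z) ((z :: (l ++ [z])).getD (t + 1) z) := fun t ht =>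
    (isChain_iff_getD _ z).1 h.isChain t (by simpa using ht)
  refine ⟨fun t => ((z :: l) ++ l').getD t z, ⟨?_, fun t ht => ?_, ?_⟩, rfl⟩
  · rw [← length_eq_card_of_nodup_of_forall_mem hnd hmem]
    exact bijOn_getD hnd hmem z
  · rw [hget t ht.le, hget (t + 1) ht]
    exact hchain t ht.le
  · rw [hget _ le_rfl]
    simpa using hchain _ le_rfl

end IsCycleAt

lemma exists_rel_of_reflTransGen {r : V → V → Prop} {P : V → Prop} {x y : V}
    (h : Relation.ReflTransGen r x y) (hx : P x) (hy : ¬P y) : ∃ u v, P u ∧ ¬P v ∧ r u v := by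
  induction h with
  | refl => exact absurd hx hy
  | @tail b c _ hbc ih =>
    by_cases hb : P b
    exacts [⟨b, c, hb, hy, hbc⟩, ih hb]

namespace CycleEnum

variable {n N : ℕ} {y : ℕ → V}

lemma eq_iff (h : CycleEnum A n N y) {s t : ℕ} (hs : s < n) (ht : t < n) : y s = y t ↔ s = t :=
  h.bijOn.injOn.eq_iff (by simpa using hs) (by simpa using ht)

lemma exists_eq (h : CycleEnum A n N y) (v : V) : ∃ t < n, y t = v := by
  obtain ⟨t, ht, rfl⟩ := h.bijOn.surjOn (Set.mem_univ v)
  exact ⟨t, by simpa using ht, rfl⟩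

lemma isHamiltonian [Fintype V] (h : CycleEnum A (Fintype.card V) N y)
    (hN : N + 1 = Fintype.card V) (hN1 : 1 ≤ N) : IsHamiltonian A := by
  refine ⟨fun i => y i, ⟨by omega, fun s t hst => Fin.ext ((h.eq_iff s.isLt t.isLt).1 hst),
    fun i => ?_⟩, fun v => ?_⟩
  · rcases (show i.val < N ∨ i.val = N by omega) with hi | hi
    · simpa [Nat.mod_eq_of_lt (show i.val + 1 < Fintype.card V by omega)] using h.path i hi
    · simpa [hi, hN] using h.closed
  · obtain ⟨t, ht, rfl⟩ := h.exists_eq v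
    exact ⟨⟨t, ht⟩, rfl⟩

lemma degree_eq (h : CycleEnum A n N y) (u : ℕ) :
    degree A (y u) = degreeIn (fun s t => A (y s) (y t)) u ↑(Finset.Ico 0 n) := by
  rw [← degreeIn_image h.bijOn.injOn, h.bijOn.image_eq]
  simp [degree, degreeIn]

lemma exists_arc [Fintype V] (h : CycleEnum A n N y) (hA : IsKStrong A 2) {e : ℕ} (he : e < n)
    {S : Set ℕ} (hS : ∃ u ∈ S, u < n ∧ u ≠ e) (hS' : ∃ v ∉ S, v < n ∧ v ≠ e) :
    ∃ u ∈ S, ∃ v ∉ S, u < n ∧ v < n ∧ u ≠ e ∧ v ≠ e ∧ A (y u) (y v) := by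
  obtain ⟨u, huS, hun, hue⟩ := hS
  obtain ⟨v, hvS, hvn, hve⟩ := hS'
  have hreach : ReachIn A {y e}ᶜ (y u) (y v) :=
    hA.2 {y e} (by simp) _ (mt (h.eq_iff hun he).1 hue) _ (mt (h.eq_iff hvn he).1 hve)
  obtain ⟨_, b, ⟨s, hsS, hsn, rfl⟩, hb, hse, hbe, hsb⟩ := exists_rel_of_reflTransGen
    (P := fun w => ∃ s ∈ S, s < n ∧ y s = w) hreach ⟨u, huS, hun, rfl⟩
    fun ⟨s, hsS, hsn, hsv⟩ => hvS ((h.eq_iff hsn hvn).1 hsv ▸ hsS)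
  obtain ⟨t, htn, rfl⟩ := h.exists_eq b
  exact ⟨s, hsS, t, fun htS => hb ⟨t, htS, htn, rfl⟩, hsn, htn, mt (congrArg y) hse,
    mt (congrArg y) hbe, hsb⟩

lemma counterexample [Fintype V] (h : CycleEnum A n N y) (hirr : ∀ v, ¬A v v)
    (h2strong : IsKStrong A 2) {k : ℕ} (hdeg : ∀ v, v ≠ y 0 → n + k ≤ degree A v)
    (hdegz : n - k - 4 ≤ degree A (y 0)) (hmax : ∀ l, IsCycleAt A (y 0) l → l.length ≤ N)
    (hN1 : 1 ≤ N) (hNn : N + 1 < n) (hkN : n - k - 2 ≤ N + 1) :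
    Counterexample (fun s t => A (y s) (y t)) k n N where
  degree_ge u hu hun := by
    rw [← h.degree_eq]
    exact hdeg _ fun hu0 => by
      have := (h.eq_iff hun (by omega)).1 hu0
      omega
  degree_zero_ge := h.degree_eq 0 ▸ hdegz
  irrefl u := hirr (y u)
  path := h.path
  to_zero := h.closed
  strong e he _ := h.exists_arc h2strong he
  bound l hl hln := by
    have hlt : ∀ t ∈ 0 :: l, t < n := List.forall_mem_cons.2 ⟨by omega, hln⟩
    rw [← l.length_map (f := y)]
    exact hmax _ (hl.map (h.bijOn.injOn.mono fun t ht => by simpa using hlt t ht))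
  one_le := hN1
  lt := hNn
  le_add := hkN

end CycleEnum

end Enumeration

/-- Let `D` be a 2-strong digraph of order `n ≥ 3` such that `n - 1` of its vertices
have degree at least `n + k` and the remaining vertex `z` has degree at least
`n - k - 4`, where `k ≥ 0` is an integer.  If `D` contains a directed cycle of length
at least `n - k - 2` passing through `z`, then `D` is Hamiltonian. -/
theorem statement0 {V : Type*} [Fintype V] [DecidableEq V] (A : V → V → Prop)
    (hirr : Irreflexive A)
    (k n : ℕ) (hn3 : 3 ≤ n) (hcard : Fintype.card V = n)
    (h2strong : IsKStrong A 2)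
    (z : V)
    (hdeg : ∀ v : V, v ≠ z → n + k ≤ degree A v)
    (hdegz : n - k - 4 ≤ degree A z)
    (hcyc : ∃ (m : ℕ) (c : Fin m → V), n - k - 2 ≤ m ∧ IsCycle A c ∧ z ∈ Set.range c) :
    IsHamiltonian A := by
  by_contra hham
  subst hcard
  obtain ⟨m, c, hm, hc, i, rfl⟩ := hcyc
  obtain ⟨l₀, hl₀, rfl⟩ := hc.exists_isCycleAt i
  obtain ⟨l, hl, hmax⟩ := hl₀.exists_longest
  obtain ⟨y, hy, hy0⟩ := hl.exists_cycleEnum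
  have hlength : l₀.length ≤ l.length := hmax l₀ hl₀
  have hone : 1 ≤ l.length := by
    have := hc.1
    omega
  have hlt : l.length + 1 < Fintype.card V := by
    have : l.length + 1 ≤ Fintype.card V := hl.nodup.length_le_card
    have : l.length + 1 ≠ Fintype.card V := fun hcard => hham (hy.isHamiltonian hcard hone)
    omega
  rw [← hy0] at hdeg hdegz hmax
  exact (hy.counterexample hirr h2strong hdeg hdegz hmax hone hlt (by omega)).false
end

section
/- Let D be a digraph of order n ≥ 4 such that n−1 of its vertices have degree at least n and the remaining vertex z has degree at most n−2. If D contains a directed cycle C = x_1 x_2 … x_m x_1 through z that has an (x_i, x_j)-bypass P such that z does not lie on the subpath of C from x_{i+1} to x_{j−1}, then D contains a directed cycle through z of length at least m+1. -/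
/-!
Among all bypasses of the cycle that leave `z` on the retained segment `R`, choose one whose
avoided segment `Q` is shortest, and let `y` be the first interior vertex of the bypass `W`. By
minimality no arc joins `y` to a vertex of `Q`, and no vertex off the cycle is the midpoint of a
path of length two between `y` and a vertex of `Q`: either would give a bypass avoiding less.

Suppose the cycle is longest among those through `z`. Enlarge `R` by vertices of `Q` to a longest
list `S` for which `W` followed by `S` is still a cycle. This cycle is not longer than the given
one, so `S` misses some `v ∈ Q`. A vertex that cannot be inserted between two consecutive vertices
of a path has at most one arc more to the path than the path has vertices. As `y` does not fit into
`R`, nor `v` into `S`, adding up all arcs at `y` and `v` yields `d(y) + d(v) ≤ 2n - 2` for two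
nonadjacent vertices other than `z`, which is impossible if both degrees are at least `n`.
-/

section CyclicLists

variable {V : Type*} {A : V → V → Prop}

theorem cycleChain_append_iff {l₁ l₂ : List V} (h₁ : l₁ ≠ []) (h₂ : l₂ ≠ []) :
    (↑(l₁ ++ l₂) : Cycle V).Chain A ↔ l₁.IsChain A ∧ l₂.IsChain A ∧
      (∀ x ∈ l₁.getLast?, ∀ y ∈ l₂.head?, A x y) ∧ ∀ x ∈ l₂.getLast?, ∀ y ∈ l₁.head?, A x y := by
  obtain ⟨x, l₁, rfl⟩ := List.exists_cons_of_ne_nil h₁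
  obtain ⟨y, l₂, rfl⟩ := List.exists_cons_of_ne_nil h₂
  rw [List.cons_append, Cycle.chain_coe_cons, ← List.cons_append, ← List.cons_append,
    List.append_assoc, List.isChain_append, List.isChain_append]
  simp only [List.isChain_singleton, List.head?_cons, List.cons_append, Option.mem_def]
  tauto

theorem cycleChain_coe_iff_getElem {l : List V} :
    (↑l : Cycle V).Chain A ↔ ∀ i (h : i < l.length),
      A l[i] (l[(i + 1) % l.length]'(Nat.mod_lt _ (by omega))) := by
  cases l with
  | nil => simp
  | cons a l =>
    rw [Cycle.chain_coe_cons, List.isChain_iff_getElem]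
    have hmod (i : ℕ) (h : i < l.length + 1) : (a :: (l ++ [a]))[i + 1]'(by simpa using h) =
        (a :: l)[(i + 1) % (l.length + 1)]'(Nat.mod_lt _ (by simp)) := by
      rcases Nat.lt_or_eq_of_le h with hlt | heq
      · grind [Nat.mod_eq_of_lt hlt]
      · grind [Nat.mod_self]
    constructor
    · intro hch i h
      grind
    · intro hch i h
      grind

theorem cycle_append_comm (l₁ l₂ : List V) : (↑(l₁ ++ l₂) : Cycle V) = ↑(l₂ ++ l₁) :=
  Cycle.coe_eq_coe.2 List.isRotated_append

theorem cycleChain_insert {l₁ l₂ : List V} {x y v : V}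
    (h : (↑(l₁ ++ x :: y :: l₂) : Cycle V).Chain A) (hx : A x v) (hy : A v y) :
    (↑(l₁ ++ x :: v :: y :: l₂) : Cycle V).Chain A := by
  have hrot (l : List V) : (↑(l₁ ++ x :: l) : Cycle V) = ↑(x :: (l ++ l₁)) :=
    cycle_append_comm l₁ (x :: l)
  rw [hrot, Cycle.chain_coe_cons] at h ⊢
  simp_all [List.isChain_cons_cons]

end CyclicLists

section ArcCount

variable {V : Type*} {A : V → V → Prop}

/-- The number of arcs joining `v` and `u`, counting both directions. The degree of `v` is the sum
of these numbers, which lets arcs be counted segment by segment along a cycle. -/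
noncomputable def arcCount (A : V → V → Prop) (v u : V) : ℕ :=
  open scoped Classical in (if A v u then 1 else 0) + (if A u v then 1 else 0)

theorem arcCount_le_two (v u : V) : arcCount A v u ≤ 2 := by
  grind [arcCount]

theorem arcCount_eq_zero_iff {v u : V} : arcCount A v u = 0 ↔ ¬ A v u ∧ ¬ A u v := by
  grind [arcCount]

theorem arcCount_self (hirr : ∀ x, ¬ A x x) (v : V) : arcCount A v v = 0 :=
  arcCount_eq_zero_iff.2 ⟨hirr v, hirr v⟩

theorem arcCount_add_arcCount_le_two {v w u : V} (h : ¬ (A v u ∧ A u w)) (h' : ¬ (A w u ∧ A u v)) :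
    arcCount A v u + arcCount A w u ≤ 2 := by
  grind [arcCount]

theorem degree_eq_sum_arcCount [Fintype V] (v : V) : degree A v = ∑ u, arcCount A v u := by
  classical
  simp [degree, arcCount, Finset.sum_add_distrib, Set.ncard_eq_toFinset_card']

theorem sum_add_two_le_two_mul_card {F : Finset V} {f : V → ℕ} {v : V} (hv : v ∈ F) (hfv : f v = 0)
    (hf : ∀ u ∈ F, f u ≤ 2) : ∑ u ∈ F, f u + 2 ≤ 2 * F.card := by
  classical
  have herase : ∑ u ∈ F.erase v, f u ≤ (F.erase v).card • 2 :=
    Finset.sum_le_card_nsmul _ f 2 fun u hu => hf u (Finset.mem_of_mem_erase hu)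
  have hsum := Finset.add_sum_erase F f hv
  have hcard := Finset.card_erase_add_one hv
  rw [smul_eq_mul] at herase
  omega

/-- A consecutive pair `x, y` of `l` contributes the summands `[A x v]` and `[A v y]`; unless `v`
fits between them, one of the two vanishes. -/
theorem exists_insertion_of_lt_sum_arcCount {v : V} {l : List V}
    (h : l.length + 1 < (l.map (arcCount A v)).sum) :
    ∃ l₁ x y l₂, l = l₁ ++ x :: y :: l₂ ∧ A x v ∧ A v y := by
  classical
  suffices key : ∀ (l : List V) (x : V),
      l.length + 1 + (if A v x then 1 else 0) < ((x :: l).map (arcCount A v)).sum →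
      ∃ l₁ x' y l₂, x :: l = l₁ ++ x' :: y :: l₂ ∧ A x' v ∧ A v y by
    cases l with
    | nil => simp at h
    | cons x l => exact key l x (by grind)
  intro l
  induction l with
  | nil => intro x hx; grind [arcCount]
  | cons y l ih =>
    intro x hx
    by_cases hxy : A x v ∧ A v y
    · exact ⟨[], x, y, l, rfl, hxy⟩
    · obtain ⟨l₁, x', y', l₂, hl, hv⟩ := ih y (by grind [arcCount])
      exact ⟨x :: l₁, x', y', l₂, by rw [hl, List.cons_append], hv⟩

theorem exists_perm_cons_cycleChain_of_lt_sum_arcCount {v : V} {l₁ l₂ : List V}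
    (hch : (↑(l₁ ++ l₂) : Cycle V).Chain A) (h : l₂.length + 1 < (l₂.map (arcCount A v)).sum) :
    ∃ l₂', l₂'.Perm (v :: l₂) ∧ (↑(l₁ ++ l₂') : Cycle V).Chain A := by
  obtain ⟨k₁, x, y, k₂, rfl, hx, hy⟩ := exists_insertion_of_lt_sum_arcCount h
  refine ⟨k₁ ++ x :: v :: y :: k₂, by simpa using List.perm_middle (l₁ := k₁ ++ [x]), ?_⟩
  rw [← List.append_assoc] at hch ⊢
  exact cycleChain_insert hch hx hy

end ArcCount

section Bypass

variable {V : Type*} {A : V → V → Prop} {s : Cycle V} {z : V} {R Q W : List V}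

/-- `IsBypass A s R Q W`: the cyclic sequence `s` is cut into a segment `R` followed by a segment
`Q`, and `W` lists the interior vertices of a bypass from the last vertex of `R` to its first
vertex. The bypass is encoded by the cycle `W ++ R` which it closes, so `Q` is the part of `s`
avoided by that cycle. -/
structure IsBypass (A : V → V → Prop) (s : Cycle V) (R Q W : List V) : Prop where
  coe_append : (↑(R ++ Q) : Cycle V) = s
  chain : (↑(W ++ R) : Cycle V).Chain A
  ne_nil : W ≠ []
  nodup : W.Nodup
  notMem : ∀ u ∈ W, u ∉ s

/-- A bypass of `s` whose avoided segment `Q` is shortest possible among the bypasses that keep `z`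
on the segment `R`. -/
structure IsMinimalBypass (A : V → V → Prop) (s : Cycle V) (z : V) (R Q W : List V) : Prop
    extends IsBypass A s R Q W where
  mem : z ∈ R
  length_le : ∀ {R' Q' W' : List V}, IsBypass A s R' Q' W' → z ∈ R' → Q.length ≤ Q'.length

theorem IsBypass.exists_isMinimalBypass (hb : IsBypass A s R Q W) (hz : z ∈ R) :
    ∃ R' Q' W', IsMinimalBypass A s z R' Q' W' := by
  classical
  have hex : ∃ k R' Q' W', Q'.length = k ∧ IsBypass A s R' Q' W' ∧ z ∈ R' :=
    ⟨_, R, Q, W, rfl, hb, hz⟩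
  obtain ⟨R', Q', W', hk, hb', hz'⟩ := Nat.find_spec hex
  exact ⟨R', Q', W', hb', hz', fun h hz => hk ▸ Nat.find_min' hex ⟨_, _, _, rfl, h, hz⟩⟩

theorem IsBypass.mem_iff (hb : IsBypass A s R Q W) {u : V} : u ∈ s ↔ u ∈ R ∨ u ∈ Q := by
  rw [← hb.coe_append, Cycle.mem_coe_iff, List.mem_append]

theorem IsBypass.isChain_interior (hb : IsBypass A s R Q W) (hR : R ≠ []) : W.IsChain A :=
  ((cycleChain_append_iff hb.ne_nil hR).1 hb.chain).1

theorem IsBypass.redirect_end {Q₁ Q₂ W' : List V} {v : V} (hs : s.Chain A)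
    (hb : IsBypass A s R (Q₁ ++ v :: Q₂) W) (hR : R ≠ []) (hne : W' ≠ []) (hnd : W'.Nodup)
    (hW' : ∀ u ∈ W', u ∉ s) (hhead : W'.head? = W.head?) (hch : (W' ++ [v]).IsChain A) :
    IsBypass A s (v :: (Q₂ ++ R)) Q₁ W' := by
  have hrot : (↑(v :: (Q₂ ++ R) ++ Q₁) : Cycle V) = s := by
    rw [← hb.coe_append, ← List.append_assoc, cycle_append_comm _ (v :: Q₂)]
    simp
  refine ⟨hrot, ?_, hne, hnd, hW'⟩
  have hR' : (v :: (Q₂ ++ R)).IsChain A := by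
    rw [← hrot, List.cons_append, Cycle.chain_coe_cons] at hs
    exact hs.prefix ⟨Q₁ ++ [v], by simp⟩
  have hlast := ((cycleChain_append_iff hb.ne_nil hR).1 hb.chain).2.2.2
  rw [List.isChain_append] at hch
  refine (cycleChain_append_iff hne (List.cons_ne_nil _ _)).2
    ⟨hch.1, hR', by simpa using hch.2.2, ?_⟩
  rw [← List.cons_append, List.getLast?_append_of_ne_nil _ hR, hhead]
  exact hlast

theorem IsBypass.redirect_start {Q₁ Q₂ W' : List V} {v : V} (hs : s.Chain A)
    (hb : IsBypass A s R (Q₁ ++ v :: Q₂) W) (hR : R ≠ []) (hne : W' ≠ []) (hnd : W'.Nodup)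
    (hW' : ∀ u ∈ W', u ∉ s) (hlast : W'.getLast? = W.getLast?) (hch : (v :: W').IsChain A) :
    IsBypass A s (R ++ (Q₁ ++ [v])) Q₂ W' := by
  have hsplit : (↑(R ++ (Q₁ ++ [v]) ++ Q₂) : Cycle V) = s := by
    rw [← hb.coe_append]
    simp
  refine ⟨hsplit, ?_, hne, hnd, hW'⟩
  have hR' : (R ++ (Q₁ ++ [v])).IsChain A := by
    obtain ⟨x, R, rfl⟩ := List.exists_cons_of_ne_nil hR
    rw [← hsplit, List.cons_append, List.cons_append, Cycle.chain_coe_cons] at hs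
    exact hs.prefix ⟨Q₂ ++ [x], by simp⟩
  have hhead := ((cycleChain_append_iff hb.ne_nil hR).1 hb.chain).2.2.1
  rw [List.isChain_cons] at hch
  refine (cycleChain_append_iff hne (by simp)).2 ⟨hch.2, hR', ?_, ?_⟩
  · rw [List.head?_append_of_ne_nil _ hR, hlast]
    exact hhead
  · simpa using hch.1

/-- The alternative bypass would avoid only the part of `Q` preceding `v`. -/
theorem IsMinimalBypass.not_isChain_append_singleton {W' : List V} {v : V} (hs : s.Chain A)
    (hb : IsMinimalBypass A s z R Q W) (hv : v ∈ Q) (hne : W' ≠ []) (hnd : W'.Nodup)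
    (hW' : ∀ u ∈ W', u ∉ s) (hhead : W'.head? = W.head?) : ¬ (W' ++ [v]).IsChain A := by
  intro hch
  obtain ⟨Q₁, Q₂, rfl⟩ := List.append_of_mem hv
  have hshort := hb.length_le
    (hb.redirect_end hs (List.ne_nil_of_mem hb.mem) hne hnd hW' hhead hch) (by simp [hb.mem])
  rw [List.length_append, List.length_cons] at hshort
  omega

/-- The alternative bypass would avoid only the part of `Q` following `v`. -/
theorem IsMinimalBypass.not_isChain_cons {W' : List V} {v : V} (hs : s.Chain A)
    (hb : IsMinimalBypass A s z R Q W) (hv : v ∈ Q) (hne : W' ≠ []) (hnd : W'.Nodup)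
    (hW' : ∀ u ∈ W', u ∉ s) (hlast : W'.getLast? = W.getLast?) : ¬ (v :: W').IsChain A := by
  intro hch
  obtain ⟨Q₁, Q₂, rfl⟩ := List.append_of_mem hv
  have hshort := hb.length_le
    (hb.redirect_start hs (List.ne_nil_of_mem hb.mem) hne hnd hW' hlast hch) (by simp [hb.mem])
  grind

theorem IsMinimalBypass.arcCount_eq_zero {y v : V} (hs : s.Chain A)
    (hb : IsMinimalBypass A s z R Q (y :: W)) (hv : v ∈ Q) : arcCount A y v = 0 := by
  have hy := hb.notMem y List.mem_cons_self
  have hW := hb.isChain_interior (List.ne_nil_of_mem hb.mem)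
  refine arcCount_eq_zero_iff.2 ⟨fun hyv => ?_, fun hvy => ?_⟩
  · exact hb.not_isChain_append_singleton hs hv (W' := [y]) (by simp) (by simp) (by simpa)
      (by simp) (by simpa)
  · exact hb.not_isChain_cons hs hv hb.ne_nil hb.nodup hb.notMem rfl
      (List.isChain_cons_cons.2 ⟨hvy, hW⟩)

theorem IsMinimalBypass.not_arc_head_and_arc {y v u : V} (hirr : ∀ x, ¬ A x x) (hs : s.Chain A)
    (hb : IsMinimalBypass A s z R Q (y :: W)) (hv : v ∈ Q) (hu : u ∉ s) :
    ¬ (A y u ∧ A u v) := by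
  rintro ⟨hyu, huv⟩
  have hy := hb.notMem y List.mem_cons_self
  have hne : y ≠ u := fun h => hirr u (h ▸ hyu)
  exact hb.not_isChain_append_singleton hs hv (W' := [y, u]) (by simp) (by simpa) (by simp [hy, hu])
    (by simp) (by simp [hyu, huv])

theorem IsMinimalBypass.not_arc_and_arc_head {y v u : V} (hs : s.Chain A)
    (hb : IsMinimalBypass A s z R Q (y :: W)) (hv : v ∈ Q) (hu : u ∉ s) :
    ¬ (A v u ∧ A u y) := by
  rintro ⟨hvu, huy⟩
  have hW := hb.isChain_interior (List.ne_nil_of_mem hb.mem)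
  by_cases huW : u ∈ y :: W
  · obtain ⟨W₁, W₂, hsplit⟩ := List.append_of_mem huW
    have hsuff : u :: W₂ <:+ y :: W := ⟨W₁, hsplit.symm⟩
    exact hb.not_isChain_cons hs hv (List.cons_ne_nil u W₂) (hb.nodup.sublist hsuff.sublist)
      (fun w hw => hb.notMem w (hsuff.subset hw))
      (by rw [hsplit, List.getLast?_append_of_ne_nil _ (List.cons_ne_nil _ _)])
      (List.isChain_cons_cons.2 ⟨hvu, hW.suffix hsuff⟩)
  · exact hb.not_isChain_cons hs hv (List.cons_ne_nil u _) (List.nodup_cons.2 ⟨huW, hb.nodup⟩)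
      (List.forall_mem_cons.2 ⟨hu, hb.notMem⟩) (by simp)
      (List.isChain_cons_cons.2 ⟨hvu, List.isChain_cons_cons.2 ⟨huy, hW⟩⟩)

/-- Take `S` as long as possible: a vertex of `s` with more arcs to `S` could be inserted. -/
theorem IsBypass.exists_saturated_segment (hs : s.Nodup) (hb : IsBypass A s R Q W) :
    ∃ S : List V, S.Nodup ∧ R ⊆ S ∧ (∀ u ∈ S, u ∈ s) ∧ (↑(W ++ S) : Cycle V).Chain A ∧
      ∀ v ∈ s, v ∉ S → (S.map (arcCount A v)).sum ≤ S.length + 1 := by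
  classical
  let T : Set (List V) :=
    {S | S.Nodup ∧ R ⊆ S ∧ (∀ u ∈ S, u ∈ s) ∧ (↑(W ++ S) : Cycle V).Chain A}
  have hRT : R ∈ T := by
    have hnd : (R ++ Q).Nodup := by rwa [← Cycle.nodup_coe_iff, hb.coe_append]
    exact ⟨hnd.of_append_left, List.Subset.refl R, fun u hu => hb.mem_iff.2 (.inl hu), hb.chain⟩
  have hbdd : List.length '' T ⊆ Set.Iic (R ++ Q).length := by
    rintro _ ⟨S, ⟨hSn, -, hSs, -⟩, rfl⟩
    exact (hSn.subperm fun u hu => List.mem_append.2 (hb.mem_iff.1 (hSs u hu))).length_le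
  obtain ⟨S, ⟨hSn, hRS, hSs, hSc⟩, hmax⟩ :=
    Set.Finite.exists_maximalFor' List.length T ((Set.finite_Iic _).subset hbdd) ⟨R, hRT⟩
  refine ⟨S, hSn, hRS, hSs, hSc, fun v hvs hvS => ?_⟩
  by_contra! hlt
  obtain ⟨S', hperm, hS'c⟩ := exists_perm_cons_cycleChain_of_lt_sum_arcCount hSc hlt
  have hS'T : S' ∈ T := ⟨hperm.nodup_iff.2 (List.nodup_cons.2 ⟨hvS, hSn⟩),
    fun u hu => hperm.mem_iff.2 (List.mem_cons_of_mem v (hRS hu)),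
    fun u hu => (List.mem_cons.1 (hperm.mem_iff.1 hu)).elim (· ▸ hvs) (hSs u), hS'c⟩
  have hlen := hmax hS'T
  rw [hperm.length_eq, List.length_cons] at hlen
  omega

end Bypass

section LongestCycle

variable {V : Type*} {A : V → V → Prop} {s : Cycle V} {z y v : V} {R Q W : List V}

/-- A longest cycle among those through the vertex `z`, as a cyclic sequence of vertices. -/
structure IsLongestCycleThrough (A : V → V → Prop) (z : V) (s : Cycle V) : Prop where
  chain : s.Chain A
  nodup : s.Nodup
  mem : z ∈ s
  length_le : ∀ t : Cycle V, t.Chain A → t.Nodup → z ∈ t → t.length ≤ s.length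

theorem IsLongestCycleThrough.sum_arcCount_le {l₁ l₂ : List V}
    (hs : IsLongestCycleThrough A z ↑(l₁ ++ l₂)) (hy : y ∉ l₁ ++ l₂) :
    (l₂.map (arcCount A y)).sum ≤ l₂.length + 1 := by
  by_contra! hlt
  obtain ⟨l₂', hperm₂, hch⟩ := exists_perm_cons_cycleChain_of_lt_sum_arcCount hs.chain hlt
  have hperm : (l₁ ++ l₂').Perm (y :: (l₁ ++ l₂)) := (hperm₂.append_left l₁).trans List.perm_middle
  have hnd : (l₁ ++ l₂').Nodup :=
    hperm.nodup_iff.2 (List.nodup_cons.2 ⟨hy, Cycle.nodup_coe_iff.1 hs.nodup⟩)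
  have hz : z ∈ l₁ ++ l₂' :=
    hperm.mem_iff.2 (List.mem_cons_of_mem y (Cycle.mem_coe_iff.1 hs.mem))
  have hlen := hs.length_le _ hch (Cycle.nodup_coe_iff.2 hnd) (Cycle.mem_coe_iff.2 hz)
  rw [Cycle.length_coe, Cycle.length_coe, hperm.length_eq, List.length_cons] at hlen
  omega

theorem IsLongestCycleThrough.exists_mem_notMem (hs : IsLongestCycleThrough A z s)
    (hb : IsBypass A s R Q W) {S : List V} (hS : S.Nodup) (hSs : ∀ u ∈ S, u ∈ s) (hz : z ∈ S)
    (hch : (↑(W ++ S) : Cycle V).Chain A) : ∃ v ∈ s, v ∉ S := by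
  by_contra! hsS
  have hnd : (W ++ S).Nodup :=
    List.nodup_append'.2 ⟨hb.nodup, hS, fun u hW hS => hb.notMem u hW (hSs u hS)⟩
  have hlen := hs.length_le _ hch (Cycle.nodup_coe_iff.2 hnd)
    (Cycle.mem_coe_iff.2 (List.mem_append_right W hz))
  have hRQ : (R ++ Q).Nodup := by rw [← Cycle.nodup_coe_iff, hb.coe_append]; exact hs.nodup
  have hle : (R ++ Q).length ≤ S.length :=
    (hRQ.subperm fun u hu => hsS u (hb.mem_iff.2 (List.mem_append.1 hu))).length_le
  have hW := List.length_pos_iff.2 hb.ne_nil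
  rw [← hb.coe_append, Cycle.length_coe, Cycle.length_coe, List.length_append] at hlen
  omega

theorem sum_arcCount_add_length_lt (hirr : ∀ x, ¬ A x x) {F : Finset V} {S : List V}
    (hS : S.Nodup) (hSF : ∀ u ∈ S, u ∈ F) (hvF : v ∈ F) (hvS : v ∉ S)
    (h : (S.map (arcCount A v)).sum ≤ S.length + 1) :
    ∑ u ∈ F, arcCount A v u + S.length < 2 * F.card := by
  classical
  have hsub : S.toFinset ⊆ F := fun u hu => hSF u (List.mem_toFinset.1 hu)
  have hsum := Finset.sum_sdiff (f := arcCount A v) hsub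
  have hsumS : ∑ u ∈ S.toFinset, arcCount A v u = (S.map (arcCount A v)).sum :=
    List.sum_toFinset _ hS
  have hcard := Finset.card_sdiff_add_card_eq_card hsub
  have hrest := sum_add_two_le_two_mul_card (F := F \ S.toFinset) (f := arcCount A v)
    (by simp [hvF, hvS]) (arcCount_self hirr v) fun u _ => arcCount_le_two v u
  rw [List.toFinset_card_of_nodup hS] at hcard
  omega

theorem IsMinimalBypass.sum_arcCount_le [DecidableEq V] (hs : IsLongestCycleThrough A z s)
    (hb : IsMinimalBypass A s z R Q (y :: W)) :
    ∑ u ∈ (R ++ Q).toFinset, arcCount A y u ≤ R.length + 1 := by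
  have hQR : (↑(Q ++ R) : Cycle V) = s := (cycle_append_comm Q R).trans hb.coe_append
  have hnd : (R ++ Q).Nodup := by rw [← Cycle.nodup_coe_iff, hb.coe_append]; exact hs.nodup
  have hy : y ∉ Q ++ R := by
    rw [← Cycle.mem_coe_iff, hQR]
    exact hb.notMem y List.mem_cons_self
  have hR : (R.map (arcCount A y)).sum ≤ R.length + 1 :=
    IsLongestCycleThrough.sum_arcCount_le (hQR ▸ hs) hy
  have hQ : (Q.map (arcCount A y)).sum = 0 :=
    List.sum_eq_zero (List.forall_mem_map.2 fun v hv => hb.arcCount_eq_zero hs.chain hv)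
  rwa [List.sum_toFinset _ hnd, List.map_append, List.sum_append, hQ, add_zero]

/-- Every vertex off the cycle has at most two arcs to `y` and `v` together, and `y` itself has
none. -/
theorem IsMinimalBypass.sum_compl_arcCount_add_two_le [Fintype V] [DecidableEq V]
    (hirr : ∀ x, ¬ A x x) (hs : s.Chain A) (hb : IsMinimalBypass A s z R Q (y :: W))
    (hv : v ∈ Q) :
    ∑ u ∈ (R ++ Q).toFinsetᶜ, arcCount A y u + ∑ u ∈ (R ++ Q).toFinsetᶜ, arcCount A v u + 2 ≤
      2 * (R ++ Q).toFinsetᶜ.card := by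
  have hmem (u : V) : u ∈ (R ++ Q).toFinsetᶜ ↔ u ∉ s := by
    rw [Finset.mem_compl, List.mem_toFinset, List.mem_append, hb.mem_iff]
  have hyv := arcCount_eq_zero_iff.1 (hb.arcCount_eq_zero hs hv)
  rw [← Finset.sum_add_distrib]
  refine sum_add_two_le_two_mul_card (v := y) ((hmem y).2 (hb.notMem y List.mem_cons_self)) ?_
    fun u hu => arcCount_add_arcCount_le_two (hb.not_arc_head_and_arc hirr hs hv ((hmem u).1 hu))
      (hb.not_arc_and_arc_head hs hv ((hmem u).1 hu))
  rw [arcCount_self hirr, arcCount_eq_zero_iff.2 hyv.symm]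

theorem IsLongestCycleThrough.exists_degree_add_degree_le [Fintype V] (hirr : ∀ x, ¬ A x x)
    (hs : IsLongestCycleThrough A z s) (hb : IsBypass A s R Q W) (hz : z ∈ R) :
    ∃ y v, y ≠ z ∧ v ≠ z ∧ y ≠ v ∧ ¬ A y v ∧ ¬ A v y ∧
      degree A y + degree A v + 2 ≤ 2 * Fintype.card V := by
  classical
  obtain ⟨R, Q, W, hb⟩ := hb.exists_isMinimalBypass hz
  obtain ⟨y, W, rfl⟩ := List.exists_cons_of_ne_nil hb.ne_nil
  obtain ⟨S, hS, hRS, hSs, hch, hsat⟩ := hb.exists_saturated_segment hs.nodup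
  obtain ⟨v, hvs, hvS⟩ := hs.exists_mem_notMem hb.toIsBypass hS hSs (hRS hb.mem) hch
  have hvQ : v ∈ Q := (hb.mem_iff.1 hvs).resolve_left fun hvR => hvS (hRS hvR)
  have hys : y ∉ s := hb.notMem y List.mem_cons_self
  have hyv := arcCount_eq_zero_iff.1 (hb.arcCount_eq_zero hs.chain hvQ)
  refine ⟨y, v, ?_, ?_, ?_, hyv.1, hyv.2, ?_⟩
  · rintro rfl
    exact hys hs.mem
  · rintro rfl
    exact hvS (hRS hb.mem)
  · rintro rfl
    exact hys hvs
  have hmem (u : V) : u ∈ (R ++ Q).toFinset ↔ u ∈ s := by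
    rw [List.mem_toFinset, List.mem_append, hb.mem_iff]
  have hR : R.Nodup :=
    List.Nodup.of_append_left (Cycle.nodup_coe_iff.1 (hb.coe_append.symm ▸ hs.nodup))
  have hlen : R.length ≤ S.length := (hR.subperm hRS).length_le
  have hy_on := hb.sum_arcCount_le hs
  have hv_on := sum_arcCount_add_length_lt hirr hS (fun u hu => (hmem u).2 (hSs u hu))
    ((hmem v).2 hvs) hvS (hsat v hvs hvS)
  have hoff := hb.sum_compl_arcCount_add_two_le hirr hs.chain hvQ
  rw [degree_eq_sum_arcCount, degree_eq_sum_arcCount, ← Finset.sum_add_sum_compl (R ++ Q).toFinset,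
    ← Finset.sum_add_sum_compl (R ++ Q).toFinset (arcCount A v),
    ← Finset.card_add_card_compl (R ++ Q).toFinset]
  omega

end LongestCycle

section IndexedCycles

variable {V : Type*} {A : V → V → Prop}

theorem isCycle_iff_ofFn {m : ℕ} {c : Fin m → V} :
    IsCycle A c ↔ 2 ≤ m ∧ (List.ofFn c).Nodup ∧ (↑(List.ofFn c) : Cycle V).Chain A := by
  rw [IsCycle, List.nodup_ofFn, cycleChain_coe_iff_getElem]
  simp [Fin.forall_iff]

theorem isPath_iff_ofFn {m : ℕ} {p : Fin m → V} :
    IsPath A p ↔ (List.ofFn p).Nodup ∧ (List.ofFn p).IsChain A := by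
  rw [IsPath, List.nodup_ofFn, List.isChain_ofFn]
  exact and_congr_right fun _ => ⟨fun h i hi => h ⟨i, by omega⟩ hi, fun h i hi => h i hi⟩

theorem IsBypass.of_isChain {s : Cycle V} {R Q W : List V} {a b : V} (hs : s.Chain A)
    (hsplit : (↑(R ++ Q) : Cycle V) = s) (hhead : R.head? = some b) (hlast : R.getLast? = some a)
    (hch : (a :: (W ++ [b])).IsChain A) (hne : W ≠ []) (hnd : W.Nodup) (hW : ∀ u ∈ W, u ∉ s) :
    IsBypass A s R Q W := by
  have hR : R ≠ [] := by rintro rfl; simp at hhead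
  have hRch : R.IsChain A := by
    obtain ⟨x, R, rfl⟩ := List.exists_cons_of_ne_nil hR
    rw [← hsplit, List.cons_append, Cycle.chain_coe_cons] at hs
    exact hs.prefix ⟨Q ++ [x], by simp⟩
  rw [List.isChain_cons, List.isChain_append, List.head?_append_of_ne_nil _ hne] at hch
  refine ⟨hsplit, (cycleChain_append_iff hne hR).2 ⟨hch.2.1, hRch, ?_, ?_⟩, hne, hnd, hW⟩
  · simpa [hhead] using hch.2.2.2
  · simpa [hlast] using hch.1

theorem exists_segments_of_add_mod {m : ℕ} (c : Fin m → V) {i j : Fin m} {d : ℕ} (hd1 : 1 ≤ d)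
    (hdm : d < m) (hij : j.val = (i.val + d) % m) :
    ∃ R Q : List V, (↑(R ++ Q) : Cycle V) = ↑(List.ofFn c) ∧ R.head? = some (c j) ∧
      R.getLast? = some (c i) ∧
      ∀ v ∈ Q, ∃ k, 1 ≤ k ∧ k < d ∧ v = c ⟨(i.val + k) % m, Nat.mod_lt _ i.pos⟩ := by
  let L := (List.ofFn c).rotate j
  have hlen : L.length = m := by simp [L]
  have hL (k : ℕ) (hk : k < L.length) : L[k] = c ⟨(k + j) % m, Nat.mod_lt _ i.pos⟩ := by
    simp [L, List.getElem_rotate]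
  have hshift (k : ℕ) : (m - d + k + j) % m = (i.val + k) % m := by
    rw [hij, Nat.add_mod_mod, show m - d + k + (i.val + d) = i.val + k + m by omega,
      Nat.add_mod_right]
  refine ⟨L.take (m - d + 1), L.drop (m - d + 1), ?_, ?_, ?_, ?_⟩
  · rw [List.take_append_drop, Cycle.coe_eq_coe]
    exact List.IsRotated.symm ⟨j, rfl⟩
  · rw [List.head?_take, if_neg (by omega), List.head?_eq_getElem?,
      List.getElem?_eq_getElem (by omega), hL]
    simp [Nat.mod_eq_of_lt j.isLt]
  · rw [List.getLast?_take, if_neg (by omega), Nat.add_sub_cancel,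
      List.getElem?_eq_getElem (by omega), Option.some_or, hL]
    have hi := hshift 0
    simp only [add_zero, Nat.mod_eq_of_lt i.isLt] at hi
    simp only [hi, Fin.eta]
  · intro v hv
    obtain ⟨k, hk, rfl⟩ := List.getElem_of_mem hv
    rw [List.length_drop, hlen] at hk
    refine ⟨k + 1, by omega, by omega, ?_⟩
    rw [List.getElem_drop, hL]
    congr 2
    rw [← hshift]
    congr 2
    omega

theorem exists_ofFn_eq_cons_append {r : ℕ} (hr : 3 ≤ r) (p : Fin r → V) :
    ∃ W ≠ [], List.ofFn p = p ⟨0, by omega⟩ :: (W ++ [p ⟨r - 1, by omega⟩]) := by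
  obtain ⟨k, rfl⟩ := Nat.exists_eq_add_of_le' hr
  refine ⟨List.ofFn fun l : Fin (k + 1) => p l.castSucc.succ, by simp, ?_⟩
  rw [List.ofFn_succ, List.ofFn_succ']
  simp only [List.concat_eq_append]
  rfl

theorem exists_isBypass_of_isPath {m r d : ℕ} {c : Fin m → V} {p : Fin r → V} {i j : Fin m} {z : V}
    (hc : IsCycle A c) (hzc : z ∈ Set.range c) (hd1 : 1 ≤ d) (hdm : d < m)
    (hij : j.val = (i.val + d) % m) (hr3 : 3 ≤ r) (hp : IsPath A p)
    (hp0 : p ⟨0, by omega⟩ = c i) (hpl : p ⟨r - 1, by omega⟩ = c j)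
    (hmeet : Set.range p ∩ Set.range c = {c i, c j})
    (hzavoid : ∀ k : ℕ, 1 ≤ k → k < d →
      c ⟨(i.val + k) % m, Nat.mod_lt _ i.pos⟩ ≠ z) :
    ∃ R Q W, IsBypass A ↑(List.ofFn c) R Q W ∧ z ∈ R := by
  obtain ⟨R, Q, hsplit, hhead, hlast, hQ⟩ := exists_segments_of_add_mod c hd1 hdm hij
  obtain ⟨W, hne, hpW⟩ := exists_ofFn_eq_cons_append hr3 p
  rw [hp0, hpl] at hpW
  obtain ⟨hnd, hch⟩ := isPath_iff_ofFn.1 hp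
  rw [hpW] at hnd hch
  have hW : ∀ u ∈ W, u ∉ (↑(List.ofFn c) : Cycle V) := by
    intro u hu huc
    have hup : u ∈ Set.range p := by simp [← List.mem_ofFn, hpW, hu]
    have huc' : u ∈ Set.range c := by simpa [List.mem_ofFn] using huc
    have hends : u = c i ∨ u = c j := by
      simpa using hmeet.subset ⟨hup, huc'⟩
    rcases hends with rfl | rfl
    · exact (List.nodup_cons.1 hnd).1 (List.mem_append_left _ hu)
    · exact List.disjoint_of_nodup_append (List.nodup_cons.1 hnd).2 hu (List.mem_singleton.2 rfl)
  have hzR : z ∈ R := by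
    have hz : z ∈ R ++ Q := by
      rw [← Cycle.mem_coe_iff, hsplit, Cycle.mem_coe_iff, List.mem_ofFn]
      exact hzc
    refine (List.mem_append.1 hz).resolve_right fun hzQ => ?_
    obtain ⟨k, hk1, hkd, hk⟩ := hQ z hzQ
    exact hzavoid k hk1 hkd hk.symm
  exact ⟨R, Q, W, .of_isChain (isCycle_iff_ofFn.1 hc).2.2 hsplit hhead hlast hch hne
    (List.nodup_cons.1 hnd).2.of_append_left hW, hzR⟩

theorem isLongestCycleThrough_ofFn {m : ℕ} {c : Fin m → V} {z : V} (hc : IsCycle A c)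
    (hzc : z ∈ Set.range c)
    (hlongest : ∀ (k : ℕ) (c' : Fin k → V), IsCycle A c' → z ∈ Set.range c' → k ≤ m) :
    IsLongestCycleThrough A z ↑(List.ofFn c) := by
  obtain ⟨hm, hnd, hch⟩ := isCycle_iff_ofFn.1 hc
  refine ⟨hch, hnd, List.mem_ofFn.2 hzc, fun t => ?_⟩
  induction t using Quotient.inductionOn' with | _ l
  intro hl hln hzl
  rw [Cycle.mk''_eq_coe] at *
  rw [Cycle.length_coe, Cycle.length_coe, List.length_ofFn]
  by_contra! hlt
  refine hlt.not_ge (hlongest _ l.get (isCycle_iff_ofFn.2 ⟨by omega, ?_⟩) (by simpa using hzl))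
  rw [List.ofFn_get]
  exact ⟨hln, hl⟩

end IndexedCycles

theorem statement2_general {V : Type*} [Fintype V] (A : V → V → Prop) (hirr : ∀ x, ¬ A x x)
    (z : V)
    (hdeg : ∀ u v : V, u ≠ z → v ≠ z → u ≠ v → ¬ A u v → ¬ A v u →
      2 * Fintype.card V ≤ degree A u + degree A v + 1)
    (m : ℕ) (c : Fin m → V) (hc : IsCycle A c) (hzc : z ∈ Set.range c)
    (i j : Fin m) (d : ℕ) (hd1 : 1 ≤ d) (hdm : d < m)
    (hij : j.val = (i.val + d) % m)
    (r : ℕ) (hr3 : 3 ≤ r) (p : Fin r → V) (hp : IsPath A p)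
    (hp0 : p ⟨0, by omega⟩ = c i)
    (hpl : p ⟨r - 1, by omega⟩ = c j)
    (hmeet : Set.range p ∩ Set.range c = {c i, c j})
    (hzavoid : ∀ k : ℕ, 1 ≤ k → k < d →
      c ⟨(i.val + k) % m, Nat.mod_lt _ i.pos⟩ ≠ z) :
    ∃ (r' : ℕ) (c' : Fin r' → V), m + 1 ≤ r' ∧ IsCycle A c' ∧ z ∈ Set.range c' := by
  by_contra! hno
  obtain ⟨R, Q, W, hb, hzR⟩ :=
    exists_isBypass_of_isPath hc hzc hd1 hdm hij hr3 hp hp0 hpl hmeet hzavoid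
  have hlongest : IsLongestCycleThrough A z ↑(List.ofFn c) :=
    isLongestCycleThrough_ofFn hc hzc fun k c' hc' hz =>
      Nat.le_of_not_lt fun hlt => hno k c' hlt hc' hz
  obtain ⟨y, v, hyz, hvz, hne, hyv, hvy, hsum⟩ := hlongest.exists_degree_add_degree_le hirr hb hzR
  have hlarge := hdeg y v hyz hvz hne hyv hvy
  omega

/-- Let `D` be a digraph of order `n ≥ 4` such that `n - 1` vertices have degree at
least `n` and the remaining vertex `z` has degree at most `n - 2`.  If `D` contains a
directed cycle `c = x₁ x₂ … x_m x₁` through `z` having an `(x_i, x_j)`-bypass `p`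
(a directed path from `x_i` to `x_j` with at least `3` vertices meeting the cycle
only in `x_i` and `x_j`) such that `z` does not lie on the subpath of the cycle from
`x_{i+1}` to `x_{j-1}`, then `D` contains a directed cycle through `z` of length at
least `m + 1`.  Here `j = i + d (mod m)` with `1 ≤ d < m`, so the subpath from
`x_{i+1}` to `x_{j-1}` consists of the vertices `c (i + k)` for `1 ≤ k < d`. -/
theorem statement2 {V : Type*} [Fintype V] [DecidableEq V] (A : V → V → Prop)
    (hirr : Irreflexive A)
    (n : ℕ) (hn4 : 4 ≤ n) (hcard : Fintype.card V = n)
    (z : V)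
    (hdeg : ∀ v : V, v ≠ z → n ≤ degree A v)
    (hdegz : degree A z ≤ n - 2)
    (m : ℕ) (c : Fin m → V) (hc : IsCycle A c) (hzc : z ∈ Set.range c)
    (i j : Fin m) (d : ℕ) (hd1 : 1 ≤ d) (hdm : d < m)
    (hij : j.val = (i.val + d) % m)
    (r : ℕ) (hr3 : 3 ≤ r) (p : Fin r → V) (hp : IsPath A p)
    (hp0 : p ⟨0, by omega⟩ = c i)
    (hpl : p ⟨r - 1, by omega⟩ = c j)
    (hmeet : Set.range p ∩ Set.range c = {c i, c j})
    (hzavoid : ∀ k : ℕ, 1 ≤ k → k < d →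
      c ⟨(i.val + k) % m, Nat.mod_lt _ i.pos⟩ ≠ z) :
    ∃ (r' : ℕ) (c' : Fin r' → V), m + 1 ≤ r' ∧ IsCycle A c' ∧ z ∈ Set.range c' :=
  statement2_general A hirr z (fun u v hu hv _ _ _ => by
      have hu_deg := hdeg u hu
      have hv_deg := hdeg v hv
      omega)
    m c hc hzc i j d hd1 hdm hij r hr3 p hp hp0 hpl hmeet hzavoid
end
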